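/- The series identity ∑_{n≥1} (−1/4)^n · (1)_n / ((1/2)_n) · [ H_{2n}^{(2)}/n³ − 32/(5 n^5) ] = −(41/5) ζ(5) + (14/15) π² ζ(3) holds, where ζ is the Riemann zeta function. -/

import Mathlib

/-- The rising factorial (Pochhammer symbol) `(a)ₙ = a(a+1)⋯(a+n-1)`. -/
noncomputable def risingFactorial (a : ℝ) (n : ℕ) : ℝ :=
  ∏ i ∈ Finset.range n, (a + i)

/-- The generalized harmonic number `H_n^{(s)} = ∑_{k=1}^n 1/k^s`. -/
noncomputable def genHarmonic (s n : ℕ) : ℝ :=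
  ∑ k ∈ Finset.range n, 1 / ((k : ℝ) + 1) ^ s

/-!
The proof rests on Wilf–Zeilberger (WZ) pairs: if `f(n, k) - f(n + 1, k) = g(n, k) - g(n, k + 1)`
and the boundary terms at infinity vanish, then `∑ₙ g(n, 0) = ∑ₖ f(0, k)`. Write
`aₙ = (-1)ⁿ / binom(2n, n)`, which is `(-1/4)ⁿ (1)ₙ / (1/2)ₙ`.

Perturbing the factors of a hypergeometric pair by a formal parameter `X` and comparing coefficients
of `X³` in `ℝ⟦X⟧` gives the main identity, whose left-hand side is
`∑ₙ aₙ (5 (3 H_n^{(2)} + 4 H_{2n}^{(2)}) / n³ - 155 / n⁵)`. Its right-hand side `∑ₖ f(0, k)` is not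
summable in closed form, but modulo `X⁴` it differs by elementary factors from a series of Gauss
`₂F₁` type, which a second formal pair evaluates; what remains are the linear Euler sums
`∑ H_{k-1}^{(p)} / k^{5-p}`. These follow from the partial fraction relations between Tornheim
double series together with the stuffle product `ζ(2) ζ(3)`. A third, real, pair is Koecher's
`∑ₙ aₙ (5 H_n^{(2)} / n³ - 9 / n⁵) = 2 ζ(5)`; subtracting three times it from the main identity
eliminates `H_n^{(2)}`.
-/

open Filter Topology PowerSeries
open Finset.HasAntidiagonal (antidiagonal mem_antidiagonal)

/-! ### Truncated norms and convergence of Wilf–Zeilberger pairs -/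

section TruncNorm

variable {𝕜 : Type*} [NormedField 𝕜] {m i : ℕ} {r : ℝ}

/-- The weighted `ℓ¹` size `∑_{i<m} ‖aᵢ‖ rⁱ` of a power series `∑ aᵢ Xⁱ` modulo `X ^ m`: a
submultiplicative seminorm that controls the first `m` coefficients. -/
noncomputable def truncNorm (m : ℕ) (r : ℝ) (f : 𝕜⟦X⟧) : ℝ :=
  ∑ i ∈ Finset.range m, ‖coeff i f‖ * r ^ i

lemma truncNorm_nonneg (hr : 0 ≤ r) (f : 𝕜⟦X⟧) : 0 ≤ truncNorm m r f :=
  Finset.sum_nonneg fun _ _ => by positivity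

lemma truncNorm_neg (f : 𝕜⟦X⟧) : truncNorm m r (-f) = truncNorm m r f := by
  simp only [truncNorm, map_neg, norm_neg]

lemma truncNorm_add_le (hr : 0 ≤ r) (f g : 𝕜⟦X⟧) :
    truncNorm m r (f + g) ≤ truncNorm m r f + truncNorm m r g := by
  simp only [truncNorm, ← Finset.sum_add_distrib, ← add_mul, map_add]
  gcongr
  exact norm_add_le _ _

lemma truncNorm_mul_le (hr : 0 ≤ r) (f g : 𝕜⟦X⟧) :
    truncNorm m r (f * g) ≤ truncNorm m r f * truncNorm m r g := by
  let F : ℕ × ℕ → ℝ := fun x => ‖coeff x.1 f‖ * r ^ x.1 * (‖coeff x.2 g‖ * r ^ x.2)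
  have hterm : ∀ i, ‖coeff i (f * g)‖ * r ^ i ≤ ∑ x ∈ antidiagonal i, F x := by
    intro i
    rw [coeff_mul]
    refine (mul_le_mul_of_nonneg_right (norm_sum_le _ _) (by positivity)).trans_eq ?_
    rw [Finset.sum_mul]
    refine Finset.sum_congr rfl fun x hx => ?_
    rw [← mem_antidiagonal.1 hx, norm_mul, pow_add]
    ring
  calc truncNorm m r (f * g)
      ≤ ∑ i ∈ Finset.range m, ∑ x ∈ antidiagonal i, F x :=
        Finset.sum_le_sum fun i _ => hterm i
    _ = ∑ x ∈ (Finset.range m).biUnion antidiagonal, F x := by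
        refine (Finset.sum_biUnion fun i _ j _ hij => ?_).symm
        exact Finset.disjoint_left.2 fun x hi hj =>
          hij ((mem_antidiagonal.1 hi).symm.trans (mem_antidiagonal.1 hj))
    _ ≤ ∑ x ∈ Finset.range m ×ˢ Finset.range m, F x := by
        refine Finset.sum_le_sum_of_subset_of_nonneg (fun x hx => ?_) fun x _ _ => by positivity
        simp only [Finset.mem_biUnion, Finset.mem_range, mem_antidiagonal] at hx
        simp only [Finset.mem_product, Finset.mem_range]
        omega
    _ = truncNorm m r f * truncNorm m r g := by
        rw [Finset.sum_product, truncNorm, truncNorm, Finset.sum_mul_sum]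

lemma truncNorm_mul_le_of_le (hr : 0 ≤ r) {f g : 𝕜⟦X⟧} {a b : ℝ} (hf : truncNorm m r f ≤ a)
    (hg : truncNorm m r g ≤ b) : truncNorm m r (f * g) ≤ a * b :=
  (truncNorm_mul_le hr f g).trans
    (mul_le_mul hf hg (truncNorm_nonneg hr g) ((truncNorm_nonneg hr f).trans hf))

lemma norm_coeff_mul_pow_le_truncNorm (hr : 0 ≤ r) (hi : i < m) (f : 𝕜⟦X⟧) :
    ‖coeff i f‖ * r ^ i ≤ truncNorm m r f :=
  Finset.single_le_sum (f := fun i => ‖coeff i f‖ * r ^ i) (fun _ _ => by positivity)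
    (Finset.mem_range.2 hi)

lemma truncNorm_C_mul_X_pow_le (hr : 0 ≤ r) (a : 𝕜) (i : ℕ) :
    truncNorm m r (C a * X ^ i) ≤ ‖a‖ * r ^ i := by
  have h : ∀ j, ‖coeff j (C a * X ^ i)‖ * r ^ j = if j = i then ‖a‖ * r ^ i else 0 := by
    intro j
    rw [coeff_C_mul_X_pow]
    split_ifs with hj
    · rw [hj]
    · rw [norm_zero, zero_mul]
  simp only [truncNorm, h, Finset.sum_ite_eq']
  split_ifs
  · exact le_rfl
  · positivity

lemma truncNorm_C_le (hr : 0 ≤ r) (a : 𝕜) : truncNorm m r (C a) ≤ ‖a‖ := by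
  simpa using truncNorm_C_mul_X_pow_le (m := m) hr a 0

lemma truncNorm_le_one_add (hr : 0 ≤ r) {f : 𝕜⟦X⟧} {ε : ℝ} (h : truncNorm m r (f - 1) ≤ ε) :
    truncNorm m r f ≤ 1 + ε := by
  have h1 : truncNorm m r (1 : 𝕜⟦X⟧) ≤ 1 := by
    simpa using truncNorm_C_le (m := m) hr (1 : 𝕜)
  calc truncNorm m r f = truncNorm m r (1 + (f - 1)) := by rw [add_sub_cancel]
    _ ≤ 1 + ε := (truncNorm_add_le hr _ _).trans (add_le_add h1 h)

lemma truncNorm_inv_le (hr : 0 ≤ r) (hm : 0 < m) {f : 𝕜⟦X⟧} {ε : ℝ}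
    (h : truncNorm m r (f - 1) ≤ ε) (hε : ε < 1) : truncNorm m r f⁻¹ ≤ (1 - ε)⁻¹ := by
  have hf : constantCoeff f ≠ 0 := by
    intro hf
    have h0 := (norm_coeff_mul_pow_le_truncNorm hr hm (f - 1)).trans h
    simp only [coeff_zero_eq_constantCoeff, map_sub, constantCoeff_one, hf, zero_sub, norm_neg,
      norm_one, pow_zero, mul_one] at h0
    linarith
  -- the geometric series estimate, read off from the fixed point equation `f⁻¹ = 1 - (f - 1) f⁻¹`
  have hfix : f⁻¹ - 1 = -((f - 1) * f⁻¹) := by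
    rw [sub_mul, one_mul, PowerSeries.mul_inv_cancel _ hf, neg_sub]
  have hle : truncNorm m r f⁻¹ ≤ 1 + ε * truncNorm m r f⁻¹ := by
    refine truncNorm_le_one_add hr ?_
    rw [hfix, truncNorm_neg]
    exact truncNorm_mul_le_of_le hr h le_rfl
  rw [← one_div, le_div_iff₀ (by linarith)]
  linarith

lemma norm_coeff_le_div_of_truncNorm_le {f : 𝕜⟦X⟧} {B : ℝ} (hr : 0 < r) (hi : i < m)
    (h : truncNorm m r f ≤ B) : ‖coeff i f‖ ≤ B / r ^ i := by
  rw [le_div_iff₀ (by positivity)]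
  exact (norm_coeff_mul_pow_le_truncNorm hr.le hi f).trans h

lemma tendsto_coeff_of_truncNorm {ι : Type*} {l : Filter ι} {F : ι → 𝕜⟦X⟧} (hr : 0 < r)
    (hi : i < m) (h : Tendsto (fun n => truncNorm m r (F n)) l (𝓝 0)) :
    Tendsto (fun n => coeff i (F n)) l (𝓝 0) :=
  squeeze_zero_norm (fun _ => norm_coeff_le_div_of_truncNorm_le hr hi le_rfl)
    (by simpa using h.div_const (r ^ i))

end TruncNorm

lemma mul_le_mul_of_ratio_le {u v D N p q : ℝ} (hD : 0 < D) (hu : 0 ≤ u) (hp : 0 ≤ p)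
    (h : v * D ≤ u * N) (hratio : N * p ≤ q * D) : v * p ≤ u * q := by
  refine le_of_mul_le_mul_right ?_ hD
  calc v * p * D = v * D * p := by ring
    _ ≤ u * N * p := by gcongr
    _ = u * (N * p) := by ring
    _ ≤ u * (q * D) := by gcongr
    _ = u * q * D := by ring

section Raabe

variable {u : ℕ → ℝ} {c : ℝ}

lemma summable_of_raabe (hc : 0 < c) (hu : ∀ k, 0 ≤ u k)
    (h : ∀ k : ℕ, u (k + 1) * (k + 2 + c) ≤ u k * (k + 1)) : Summable u := by
  have htel : ∀ n : ℕ, ∑ k ∈ Finset.range n, u (k + 1) ≤ (u 0 - (n + 1) * u n) / c := by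
    intro n
    induction n with
    | zero => simp
    | succ n ih =>
      rw [le_div_iff₀ hc] at ih ⊢
      rw [Finset.sum_range_succ]
      push_cast
      linarith [h n]
  rw [← summable_nat_add_iff 1]
  refine summable_of_sum_range_le (c := u 0 / c) (fun k => hu _) fun n => (htel n).trans ?_
  gcongr
  linarith [mul_nonneg (by positivity : (0 : ℝ) ≤ n + 1) (hu n)]

lemma tendsto_succ_mul_of_raabe (hc : 0 < c) (hu : ∀ k, 0 ≤ u k)
    (h : ∀ k : ℕ, u (k + 1) * (k + 2 + c) ≤ u k * (k + 1)) :
    Tendsto (fun k : ℕ => (k + 1) * u k) atTop (𝓝 0) := by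
  have hnonneg : ∀ k : ℕ, 0 ≤ (k + 1) * u k := fun k => mul_nonneg (by positivity) (hu k)
  have hanti : Antitone fun k : ℕ => (k + 1) * u k := antitone_nat_of_succ_le fun k => by
    push_cast
    linarith [h k, mul_nonneg hc.le (hu (k + 1))]
  have hbdd : BddBelow (Set.range fun k : ℕ => (k + 1) * u k) :=
    ⟨0, Set.forall_mem_range.2 hnonneg⟩
  have hlim := tendsto_atTop_ciInf hanti hbdd
  suffices hL : ⨅ k : ℕ, (k + 1) * u k = 0 by rwa [hL] at hlim
  -- a positive limit `L` would bound `u k` from below by the harmonic series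
  by_contra hL
  have hpos : 0 < ⨅ k : ℕ, (k + 1) * u k := lt_of_le_of_ne (le_ciInf hnonneg) (Ne.symm hL)
  refine Real.not_summable_one_div_natCast ((summable_nat_add_iff 1).1 ?_)
  refine Summable.of_nonneg_of_le (fun k => by positivity) (fun k => ?_)
    ((summable_of_raabe hc hu h).div_const (⨅ k : ℕ, (k + 1) * u k))
  rw [div_le_div_iff₀ (by positivity) hpos, one_mul, mul_comm]
  exact_mod_cast ciInf_le hbdd k

lemma tendsto_zero_of_raabe (hc : 0 < c) (hu : ∀ k, 0 ≤ u k)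
    (h : ∀ k : ℕ, u (k + 1) * (k + 1 + c) ≤ u k * (k + 1)) : Tendsto u atTop (𝓝 0) := by
  have hk : ∀ k : ℕ, (k : ℝ) + 1 ≠ 0 := fun k => by positivity
  have hcancel : ∀ k : ℕ, ((k : ℝ) + 1) * (u k / (k + 1)) = u k := fun k =>
    mul_div_cancel₀ _ (hk k)
  simpa only [hcancel] using tendsto_succ_mul_of_raabe (u := fun k => u k / (k + 1)) hc
    (fun k => div_nonneg (hu k) (by positivity)) fun k => by
      rw [div_mul_cancel₀ _ (hk k), div_mul_eq_mul_div, div_le_iff₀ (by positivity)]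
      push_cast
      nlinarith [h k, mul_nonneg hc.le (hu (k + 1)), (k.cast_nonneg : (0 : ℝ) ≤ k)]

end Raabe

theorem tendsto_sum_of_wz {E : Type*} [NormedAddCommGroup E] [CompleteSpace E]
    {f g : ℕ → ℕ → E} {b : ℕ → ℝ} (hwz : ∀ n k, f n k - f (n + 1) k = g n k - g n (k + 1))
    (hb : Summable b) (hf : ∀ n k, ‖f n k‖ ≤ b k)
    (hf0 : ∀ k, Tendsto (fun n => f n k) atTop (𝓝 0))
    (hg0 : ∀ n, Tendsto (fun k => g n k) atTop (𝓝 0)) :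
    Tendsto (fun N => ∑ n ∈ Finset.range N, g n 0) atTop (𝓝 (∑' k, f 0 k)) := by
  have hs : ∀ n, Summable (f n) := fun n => .of_norm_bounded hb (hf n)
  have hrow : ∀ n, g n 0 = ∑' k, f n k - ∑' k, f (n + 1) k := by
    intro n
    have hpartial := ((hs n).sub (hs (n + 1))).hasSum.tendsto_sum_nat
    simp only [hwz, Finset.sum_range_sub' (g n)] at hpartial
    rw [← (hs n).tsum_sub (hs (n + 1))]
    simpa only [hwz, sub_zero] using
      tendsto_nhds_unique ((tendsto_const_nhds (x := g n 0)).sub (hg0 n)) hpartial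
  have hlim : Tendsto (fun n => ∑' k, f n k) atTop (𝓝 0) := by
    simpa using tendsto_tsum_of_dominated_convergence hb hf0 (.of_forall hf)
  simp only [hrow, Finset.sum_range_sub' fun n => ∑' k, f n k]
  simpa using (tendsto_const_nhds (x := ∑' k, f 0 k)).sub hlim

section PowerSeriesWZ

variable {𝕜 : Type*} [NormedField 𝕜] [CompleteSpace 𝕜] {F G : ℕ → ℕ → 𝕜⟦X⟧} {b : ℕ → ℝ} {m i : ℕ}
  {r : ℝ}

theorem tendsto_sum_coeff_of_wz (hr : 0 < r) (hi : i < m)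
    (hwz : ∀ n k, F n k - F (n + 1) k = G n k - G n (k + 1))
    (hb : Summable b) (hF : ∀ n k, truncNorm m r (F n k) ≤ b k)
    (hF0 : ∀ k, Tendsto (fun n => truncNorm m r (F n k)) atTop (𝓝 0))
    (hG0 : ∀ n, Tendsto (fun k => truncNorm m r (G n k)) atTop (𝓝 0)) :
    Tendsto (fun N => ∑ n ∈ Finset.range N, coeff i (G n 0)) atTop
      (𝓝 (∑' k, coeff i (F 0 k))) :=
  tendsto_sum_of_wz (f := fun n k => coeff i (F n k)) (g := fun n k => coeff i (G n k))
    (fun n k => by simpa only [map_sub] using congrArg (coeff i) (hwz n k))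
    (hb.div_const (r ^ i)) (fun n k => norm_coeff_le_div_of_truncNorm_le hr hi (hF n k))
    (fun k => tendsto_coeff_of_truncNorm hr hi (hF0 k))
    fun n => tendsto_coeff_of_truncNorm hr hi (hG0 n)

end PowerSeriesWZ

/-! ### Perturbed Pochhammer symbols -/

section QuadFactor

/-- The power series `(1 + αX/j)(1 + βX/j)`, where `α` and `β` have sum `a` and product `b`. -/
noncomputable def quadFactor (a b : ℝ) (j : ℕ) : ℝ⟦X⟧ :=
  1 + C a * (C (1 / (j : ℝ)) * X) + C b * (C (1 / (j : ℝ)) * X) ^ 2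

/-- The product `(1 + αX)_n (1 + βX)_n / n!²` of two normalised rising factorials, where `α` and
`β` have sum `a` and product `b`; for `b = 0` it is `(1 + aX)_n / n!`. -/
noncomputable def quadPoch (a b : ℝ) (n : ℕ) : ℝ⟦X⟧ :=
  ∏ j ∈ Finset.range n, quadFactor a b (j + 1)

variable {a b : ℝ} {j : ℕ}

lemma quadPoch_zero (a b : ℝ) : quadPoch a b 0 = 1 := Finset.prod_range_zero _

lemma quadPoch_succ (a b : ℝ) (n : ℕ) :
    quadPoch a b (n + 1) = quadPoch a b n * quadFactor a b (n + 1) :=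
  Finset.prod_range_succ _ n

lemma constantCoeff_quadFactor (a b : ℝ) (j : ℕ) : constantCoeff (quadFactor a b j) = 1 := by
  simp [quadFactor]

lemma constantCoeff_quadPoch (a b : ℝ) (n : ℕ) : constantCoeff (quadPoch a b n) = 1 := by
  simp [quadPoch, map_prod, constantCoeff_quadFactor]

lemma quadFactor_mul_inv (a b : ℝ) (j : ℕ) : quadFactor a b j * (quadFactor a b j)⁻¹ = 1 :=
  PowerSeries.mul_inv_cancel _ (by simp [constantCoeff_quadFactor])

lemma quadPoch_mul_inv (a b : ℝ) (n : ℕ) : quadPoch a b n * (quadPoch a b n)⁻¹ = 1 :=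
  PowerSeries.mul_inv_cancel _ (by simp [constantCoeff_quadPoch])

lemma natCast_mul_C_one_div (hj : j ≠ 0) : (j : ℝ⟦X⟧) * C (1 / (j : ℝ)) = 1 := by
  rw [← map_natCast C, ← map_mul, mul_one_div_cancel (Nat.cast_ne_zero.2 hj), map_one]

lemma C_div_mul (x : ℝ) {y : ℝ} (hy : y ≠ 0) : (C (x / y) : ℝ⟦X⟧) * C y = C x := by
  rw [← map_mul, div_mul_cancel₀ _ hy]

lemma mul_eq_mul_of_ratio {T T' A D a d : ℝ⟦X⟧} {x y : ℝ} (hy : y ≠ 0)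
    (hD : constantCoeff D = 1) (hT : T' = T * (C (x / y) * A * D⁻¹)) (hd : C y * D = d)
    (ha : C x * A = a) : T' * d = T * a := by
  have hinv : D * D⁻¹ = 1 := PowerSeries.mul_inv_cancel _ (by simp [hD])
  rw [hT, ← hd, ← ha]
  linear_combination T * A * (C_div_mul x hy * (D * D⁻¹) + C x * hinv)

lemma natCast_mul_quadFactor (a : ℝ) (hj : j ≠ 0) :
    (j : ℝ⟦X⟧) * quadFactor a 0 j = (j : ℝ⟦X⟧) + C a * X := by
  rw [quadFactor, map_zero]
  linear_combination C a * X * natCast_mul_C_one_div hj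

lemma natCast_sq_mul_quadFactor (a b : ℝ) (hj : j ≠ 0) :
    (j : ℝ⟦X⟧) ^ 2 * quadFactor a b j = (j : ℝ⟦X⟧) ^ 2 + C a * (j : ℝ⟦X⟧) * X + C b * X ^ 2 := by
  rw [quadFactor]
  linear_combination (C a * X * j + C b * X ^ 2 * (j * C (1 / (j : ℝ)) + 1)) *
    natCast_mul_C_one_div hj

lemma quadFactor_two_mul (a : ℝ) (j : ℕ) : quadFactor (2 * a) 0 (2 * j) = quadFactor a 0 j := by
  have h : 2 * (1 / ((2 * j : ℕ) : ℝ)) = 1 / j := by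
    rw [Nat.cast_mul, Nat.cast_two, mul_one_div, div_mul_cancel_left₀ two_ne_zero, one_div]
  rw [quadFactor, quadFactor, ← h, map_mul, map_mul, map_zero]
  ring

/-- The normalised rising factorial `(1/2 + aX/2)_n / (1/2)_n`, which runs over the odd factors
`1 + aX/(2i + 1)`. -/
noncomputable def oddPoch (a : ℝ) (n : ℕ) : ℝ⟦X⟧ :=
  ∏ i ∈ Finset.range n, quadFactor a 0 (2 * i + 1)

lemma oddPoch_zero (a : ℝ) : oddPoch a 0 = 1 := Finset.prod_range_zero _

lemma oddPoch_succ (a : ℝ) (n : ℕ) :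
    oddPoch a (n + 1) = oddPoch a n * quadFactor a 0 (2 * n + 1) :=
  Finset.prod_range_succ _ n

lemma constantCoeff_oddPoch (a : ℝ) (n : ℕ) : constantCoeff (oddPoch a n) = 1 := by
  simp [oddPoch, map_prod, constantCoeff_quadFactor]

lemma oddPoch_mul_quadPoch (a : ℝ) (n : ℕ) :
    oddPoch (2 * a) n * quadPoch a 0 n = quadPoch (2 * a) 0 (2 * n) := by
  induction n with
  | zero => simp [oddPoch_zero, quadPoch_zero]
  | succ n ih =>
    rw [oddPoch_succ, quadPoch_succ, mul_add_one, quadPoch_succ, quadPoch_succ, ← ih,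
      ← quadFactor_two_mul a (n + 1), mul_add_one]
    ring

lemma quadPoch_mul_quadPoch_neg (a : ℝ) (n : ℕ) :
    quadPoch a 0 n * quadPoch (-a) 0 n = quadPoch 0 (-a ^ 2) n := by
  rw [quadPoch, quadPoch, ← Finset.prod_mul_distrib]
  refine Finset.prod_congr rfl fun j _ => ?_
  simp only [quadFactor, map_neg, map_zero, map_pow]
  ring

section Norm

variable {m : ℕ} {r ε : ℝ}

lemma truncNorm_quadFactor_sub_one_le (hr : 0 ≤ r) (h : |a| * r + |b| * r ^ 2 ≤ ε) (j : ℕ) :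
    truncNorm m r (quadFactor a b j - 1) ≤ ε / j := by
  have hsplit : quadFactor a b j - 1 = C (a / (j : ℝ)) * X ^ 1 + C (b / (j : ℝ) ^ 2) * X ^ 2 := by
    simp only [quadFactor, div_eq_mul_inv, map_mul, ← inv_pow, map_pow, one_mul]
    ring
  have hb : ‖b / (j : ℝ) ^ 2‖ ≤ |b| / j := by
    rw [norm_div, norm_pow, Real.norm_eq_abs, Real.norm_natCast]
    rcases Nat.eq_zero_or_pos j with rfl | hj
    · simp
    · have : (1 : ℝ) ≤ j := Nat.one_le_cast.2 hj
      gcongr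
      exact le_self_pow₀ this two_ne_zero
  calc truncNorm m r (quadFactor a b j - 1)
      ≤ ‖a / j‖ * r ^ 1 + ‖b / j ^ 2‖ * r ^ 2 := by
        rw [hsplit]
        exact (truncNorm_add_le hr _ _).trans
          (add_le_add (truncNorm_C_mul_X_pow_le hr _ _) (truncNorm_C_mul_X_pow_le hr _ _))
    _ ≤ |a| / j * r ^ 1 + |b| / j * r ^ 2 := by
        gcongr
        simp
    _ = (|a| * r + |b| * r ^ 2) / j := by ring
    _ ≤ ε / j := by gcongr

lemma truncNorm_quadFactor_le (hr : 0 ≤ r) (h : |a| * r + |b| * r ^ 2 ≤ ε) (j : ℕ) :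
    truncNorm m r (quadFactor a b j) ≤ 1 + ε / j :=
  truncNorm_le_one_add hr (truncNorm_quadFactor_sub_one_le hr h j)

lemma truncNorm_quadFactor_inv_le (hr : 0 ≤ r) (hm : 0 < m) (h : |a| * r + |b| * r ^ 2 ≤ ε)
    (hj : ε < j) : truncNorm m r (quadFactor a b j)⁻¹ ≤ (1 - ε / j)⁻¹ := by
  have hε : 0 ≤ ε := le_trans (by positivity) h
  exact truncNorm_inv_le hr hm (truncNorm_quadFactor_sub_one_le hr h j)
    ((div_lt_one (hε.trans_lt hj)).2 hj)

lemma truncNorm_quadFactor_le_one_add (hr : 0 ≤ r) (h : |a| * r + |b| * r ^ 2 ≤ ε) (hj : 1 ≤ j) :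
    truncNorm m r (quadFactor a b j) ≤ 1 + ε := by
  have hε : 0 ≤ ε := le_trans (by positivity) h
  exact (truncNorm_quadFactor_le hr h j).trans
    (by gcongr; exact div_le_self hε (Nat.one_le_cast.2 hj))

lemma truncNorm_quadFactor_inv_le_inv_one_sub (hr : 0 ≤ r) (hm : 0 < m)
    (h : |a| * r + |b| * r ^ 2 ≤ ε) (hε1 : ε < 1) (hj : 1 ≤ j) :
    truncNorm m r (quadFactor a b j)⁻¹ ≤ (1 - ε)⁻¹ := by
  have hε : 0 ≤ ε := le_trans (by positivity) h
  have hj' : (1 : ℝ) ≤ j := Nat.one_le_cast.2 hj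
  exact truncNorm_inv_le hr hm
    ((truncNorm_quadFactor_sub_one_le hr h j).trans (div_le_self hε hj')) hε1

end Norm

end QuadFactor

section ModXPow

variable {R : Type*} [CommRing R]

lemma prod_smodEq_of_smodEq {ι : Type*} {f g u : ι → R} {d : R} (s : Finset ι)
    (hu : ∀ j ∈ s, d ∣ u j) (h : ∀ j ∈ s, f j ≡ (1 + u j) * g j [SMOD Ideal.span {d ^ 2}]) :
    ∏ j ∈ s, f j ≡ (1 + ∑ j ∈ s, u j) * ∏ j ∈ s, g j [SMOD Ideal.span {d ^ 2}] := by
  classical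
  have hlin : ∏ j ∈ s, (1 + u j) ≡ 1 + ∑ j ∈ s, u j [SMOD Ideal.span {d ^ 2}] := by
    clear h
    induction s using Finset.induction_on with
    | empty => simp
    | insert i s hi ih =>
      rw [Finset.prod_insert hi, Finset.sum_insert hi]
      refine (SModEq.mul SModEq.rfl (ih fun j hj => hu j (Finset.mem_insert_of_mem hj))).trans ?_
      rw [SModEq.sub_mem, Ideal.mem_span_singleton, sq]
      have := mul_dvd_mul (hu i (Finset.mem_insert_self i s))
        (Finset.dvd_sum fun j hj => hu j (Finset.mem_insert_of_mem hj))
      convert this using 1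
      ring
  refine (SModEq.prod h).trans ?_
  rw [Finset.prod_mul_distrib]
  exact hlin.mul SModEq.rfl

end ModXPow

/-! ### The Gauss pair -/

/-- The beta value `B(n + 1, k + 1) = n! k! / (n + k + 1)!`. -/
noncomputable def betaNat (n k : ℕ) : ℝ := (n.factorial * k.factorial : ℝ) / (n + k + 1).factorial

lemma betaNat_comm (n k : ℕ) : betaNat n k = betaNat k n := by
  rw [betaNat, betaNat, add_comm n k, mul_comm]

lemma betaNat_succ_left (n k : ℕ) :
    betaNat (n + 1) k = betaNat n k * (n + 1) / ((n : ℝ) + k + 2) := by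
  rw [betaNat, betaNat, show n + 1 + k + 1 = (n + k + 1) + 1 by ring, Nat.factorial_succ,
    Nat.factorial_succ (n + k + 1)]
  push_cast
  field_simp
  ring

lemma betaNat_succ_right (n k : ℕ) :
    betaNat n (k + 1) = betaNat n k * (k + 1) / ((n : ℝ) + k + 2) := by
  rw [betaNat_comm, betaNat_succ_left, betaNat_comm, add_comm (k : ℝ) n]

lemma betaNat_zero_left (k : ℕ) : betaNat 0 k = 1 / ((k : ℝ) + 1) := by
  rw [betaNat, zero_add, Nat.factorial_succ, Nat.factorial_zero]
  push_cast
  field_simp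

lemma betaNat_zero_right (n : ℕ) : betaNat n 0 = 1 / ((n : ℝ) + 1) := by
  rw [betaNat_comm, betaNat_zero_left]

section Gauss

local notation "τ" => truncNorm 4 (1 / 1000 : ℝ)

/-- The summand `(l! k! / (l + k + 1)!) (1 + X)_k (1 + 4X)_k (1 - X)_l (1 + 2X)_l` over
`(k + 1) (1 - 2X)_l (1 + 3X)_{l+k+1}`, with normalised rising factorials. It is one component of the
Wilf–Zeilberger pair for Gauss's `₂F₁` summation theorem. -/
noncomputable def gaussTerm (l k : ℕ) : ℝ⟦X⟧ :=
  C (betaNat l k / ((k : ℝ) + 1)) * (quadPoch 5 4 k * quadPoch 1 (-2) l) *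
    (quadPoch (-2) 0 l * quadPoch 3 0 (l + k + 1))⁻¹

/-- The Wilf–Zeilberger companion of `gaussTerm`. -/
noncomputable def gaussCompanion (l k : ℕ) : ℝ⟦X⟧ :=
  gaussTerm l k * (C (((k : ℝ) + 1) / ((l : ℝ) + 1)) * (quadFactor (-2) 0 (l + 1))⁻¹)

lemma gaussTerm_succ_left (l k : ℕ) : gaussTerm (l + 1) k = gaussTerm l k *
    (C (((l : ℝ) + 1) ^ 2 / ((l + 1) * (l + k + 2))) * quadFactor 1 (-2) (l + 1) *
      (quadFactor (-2) 0 (l + 1) * quadFactor 3 0 (l + k + 2))⁻¹) := by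
  have hc : betaNat (l + 1) k / ((k : ℝ) + 1) =
      betaNat l k / (k + 1) * ((l + 1) ^ 2 / ((l + 1) * (l + k + 2))) := by
    rw [betaNat_succ_left]
    field_simp
  simp only [gaussTerm, hc, map_mul C (betaNat l k / ((k : ℝ) + 1)), quadPoch_succ,
    PowerSeries.mul_inv_rev, show l + 1 + k + 1 = (l + k + 1) + 1 by ring]
  ring

lemma gaussTerm_succ_right (l k : ℕ) : gaussTerm l (k + 1) = gaussTerm l k *
    (C (((k : ℝ) + 1) ^ 2 / ((k + 2) * (l + k + 2))) * quadFactor 5 4 (k + 1) *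
      (quadFactor 3 0 (l + k + 2))⁻¹) := by
  have hc : betaNat l (k + 1) / (((k + 1 : ℕ) : ℝ) + 1) =
      betaNat l k / (k + 1) * ((k + 1) ^ 2 / ((k + 2) * (l + k + 2))) := by
    rw [betaNat_succ_right]
    push_cast
    field_simp
    ring
  simp only [gaussTerm, hc, map_mul C (betaNat l k / ((k : ℝ) + 1)), quadPoch_succ,
    PowerSeries.mul_inv_rev, show l + (k + 1) + 1 = (l + k + 1) + 1 by ring]
  ring

lemma gaussTerm_succ_left_mul (l k : ℕ) :
    gaussTerm (l + 1) k * (((l : ℝ⟦X⟧) + 1 - 2 * X) * ((l : ℝ⟦X⟧) + (k : ℝ⟦X⟧) + 2 + 3 * X)) =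
      gaussTerm l k * (((l : ℝ⟦X⟧) + 1) ^ 2 + ((l : ℝ⟦X⟧) + 1) * X - 2 * X ^ 2) := by
  have hden := natCast_mul_quadFactor (-2) l.succ_ne_zero
  have hden' := natCast_mul_quadFactor 3 (l + k + 1).succ_ne_zero
  have hnum := natCast_sq_mul_quadFactor 1 (-2) l.succ_ne_zero
  simp only [map_neg, map_ofNat, map_one, one_mul, Nat.succ_eq_add_one, Nat.cast_add,
    Nat.cast_one] at hden hden' hnum
  refine mul_eq_mul_of_ratio (by positivity) (by simp [constantCoeff_quadFactor])
    (gaussTerm_succ_left l k) ?_ ?_ <;>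
  simp only [map_add, map_mul, map_pow, map_natCast, map_ofNat, map_one]
  · linear_combination ((l : ℝ⟦X⟧) + k + 2) * quadFactor 3 0 (l + k + 2) * hden +
      ((l : ℝ⟦X⟧) + 1 - 2 * X) * hden'
  · linear_combination hnum

lemma gaussTerm_succ_right_mul (l k : ℕ) :
    gaussTerm l (k + 1) * (((k : ℝ⟦X⟧) + 2) * ((l : ℝ⟦X⟧) + (k : ℝ⟦X⟧) + 2 + 3 * X)) =
      gaussTerm l k * (((k : ℝ⟦X⟧) + 1) ^ 2 + 5 * ((k : ℝ⟦X⟧) + 1) * X + 4 * X ^ 2) := by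
  have hden := natCast_mul_quadFactor 3 (l + k + 1).succ_ne_zero
  have hnum := natCast_sq_mul_quadFactor 5 4 k.succ_ne_zero
  simp only [map_ofNat, Nat.succ_eq_add_one, Nat.cast_add, Nat.cast_one] at hden hnum
  refine mul_eq_mul_of_ratio (by positivity) (by simp [constantCoeff_quadFactor])
    (gaussTerm_succ_right l k) ?_ ?_ <;>
  simp only [map_add, map_mul, map_pow, map_natCast, map_ofNat, map_one]
  · linear_combination ((k : ℝ⟦X⟧) + 2) * hden
  · linear_combination hnum

lemma gaussCompanion_mul (l k : ℕ) :
    gaussCompanion l k * ((l : ℝ⟦X⟧) + 1 - 2 * X) = gaussTerm l k * ((k : ℝ⟦X⟧) + 1) := by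
  have hden := natCast_mul_quadFactor (-2) l.succ_ne_zero
  simp only [map_neg, map_ofNat, Nat.succ_eq_add_one, Nat.cast_add, Nat.cast_one] at hden
  have hratio : gaussCompanion l k =
      gaussTerm l k * (C (((k : ℝ) + 1) / (l + 1)) * 1 * (quadFactor (-2) 0 (l + 1))⁻¹) := by
    rw [mul_one, gaussCompanion]
  refine mul_eq_mul_of_ratio (by positivity) (by simp [constantCoeff_quadFactor]) hratio ?_
    (by simp)
  simp only [map_add, map_natCast, map_one]
  linear_combination hden

lemma gauss_wz (l k : ℕ) : gaussTerm l k - gaussTerm (l + 1) k =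
    gaussCompanion l k - gaussCompanion l (k + 1) := by
  have hne : ((l : ℝ⟦X⟧) + 1 - 2 * X) * ((l : ℝ⟦X⟧) + (k : ℝ⟦X⟧) + 2 + 3 * X) ≠ 0 := by
    refine ne_zero_of_map (f := constantCoeff) ?_
    simp only [map_mul, map_add, map_sub, map_natCast, map_one, map_ofNat, constantCoeff_X,
      mul_zero, sub_zero, add_zero]
    positivity
  refine mul_right_cancel₀ hne ?_
  have hG := gaussCompanion_mul l (k + 1)
  push_cast at hG
  linear_combination -gaussTerm_succ_left_mul l k + gaussTerm_succ_right_mul l k -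
    ((l : ℝ⟦X⟧) + (k : ℝ⟦X⟧) + 2 + 3 * X) * (gaussCompanion_mul l k - hG)

lemma truncNorm_gaussTerm_succ_left_le (l k : ℕ) :
    τ (gaussTerm (l + 1) k) * ((l + 1 - 1 / 100) * (l + k + 2 - 1 / 100)) ≤
      τ (gaussTerm l k) * ((l + 1) * (l + 1 + 1 / 100)) := by
  have hl : (0 : ℝ) ≤ l := l.cast_nonneg
  have hk : (0 : ℝ) ≤ k := k.cast_nonneg
  have hr : (0 : ℝ) ≤ 1 / 1000 := by norm_num
  have h := truncNorm_mul_le_of_le hr (le_refl (τ (gaussTerm l k))) <|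
    truncNorm_mul_le_of_le hr
      (truncNorm_mul_le_of_le hr (truncNorm_C_le hr (((l : ℝ) + 1) ^ 2 / ((l + 1) * (l + k + 2))))
        (truncNorm_quadFactor_le (a := 1) (b := -2) (ε := 1 / 100) hr (by norm_num) (l + 1)))
      (truncNorm_mul_le_of_le hr
        (truncNorm_quadFactor_inv_le (a := 3) (b := 0) (ε := 1 / 100) (j := l + k + 2) hr four_pos
          (by norm_num) (by push_cast; linarith))
        (truncNorm_quadFactor_inv_le (a := -2) (b := 0) (ε := 1 / 100) (j := l + 1) hr four_pos
          (by norm_num) (by push_cast; linarith)))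
  rw [← PowerSeries.mul_inv_rev, ← gaussTerm_succ_left, Real.norm_of_nonneg (by positivity)] at h
  push_cast at h
  have hL : (0 : ℝ) < l + 1 - 1 / 100 := by linarith only [hl]
  have hK : (0 : ℝ) < l + k + 2 - 1 / 100 := by linarith only [hl, hk]
  rw [← le_div_iff₀ (by positivity)]
  refine h.trans_eq ?_
  rw [one_sub_div (by positivity), one_sub_div (by positivity)]
  field_simp

lemma truncNorm_gaussTerm_zero_succ_le (k : ℕ) :
    τ (gaussTerm 0 (k + 1)) * ((k + 2) * (k + 2 - 1 / 100)) ≤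
      τ (gaussTerm 0 k) * ((k + 1) * (k + 1 + 1 / 100)) := by
  have hk : (0 : ℝ) ≤ k := k.cast_nonneg
  have hr : (0 : ℝ) ≤ 1 / 1000 := by norm_num
  have h := truncNorm_mul_le_of_le hr (le_refl (τ (gaussTerm 0 k))) <|
    truncNorm_mul_le_of_le hr
      (truncNorm_mul_le_of_le hr
        (truncNorm_C_le hr (((k : ℝ) + 1) ^ 2 / ((k + 2) * ((0 : ℕ) + k + 2))))
        (truncNorm_quadFactor_le (a := 5) (b := 4) (ε := 1 / 100) hr (by norm_num) (k + 1)))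
      (truncNorm_quadFactor_inv_le (a := 3) (b := 0) (ε := 1 / 100) (j := 0 + k + 2) hr four_pos
        (by norm_num) (by push_cast; linarith))
  rw [← gaussTerm_succ_right, Real.norm_of_nonneg (by positivity)] at h
  push_cast at h
  have hK : (0 : ℝ) < k + 2 - 1 / 100 := by linarith only [hk]
  rw [← le_div_iff₀ (by positivity)]
  refine h.trans_eq ?_
  rw [zero_add, one_sub_div (by positivity)]
  field_simp

lemma truncNorm_gaussTerm_le_zero (l k : ℕ) : τ (gaussTerm l k) ≤ τ (gaussTerm 0 k) := by
  induction l with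
  | zero => exact le_rfl
  | succ l ih =>
    have hl : (0 : ℝ) ≤ l := l.cast_nonneg
    have hk : (0 : ℝ) ≤ k := k.cast_nonneg
    have h := mul_le_mul_of_ratio_le (p := 1) (q := 1) (by nlinarith)
      (truncNorm_nonneg (by norm_num) _) zero_le_one (truncNorm_gaussTerm_succ_left_le l k)
      (by nlinarith [mul_nonneg hl hk])
    linarith

lemma truncNorm_gaussTerm_zero_raabe (k : ℕ) :
    τ (gaussTerm 0 (k + 1)) * (k + 2 + 1 / 2) ≤ τ (gaussTerm 0 k) * (k + 1) := by
  have hk : (0 : ℝ) ≤ k := k.cast_nonneg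
  exact mul_le_mul_of_ratio_le (by nlinarith) (truncNorm_nonneg (by norm_num) _) (by linarith)
    (truncNorm_gaussTerm_zero_succ_le k) (by nlinarith [mul_nonneg hk hk])

lemma summable_truncNorm_gaussTerm_zero : Summable fun k => τ (gaussTerm 0 k) :=
  summable_of_raabe one_half_pos (fun _ => truncNorm_nonneg (by norm_num) _)
    truncNorm_gaussTerm_zero_raabe

lemma summable_coeff_gaussTerm_zero {i : ℕ} (hi : i < 4) :
    Summable fun k => coeff i (gaussTerm 0 k) :=
  .of_norm_bounded (summable_truncNorm_gaussTerm_zero.div_const ((1 / 1000) ^ i)) fun _ =>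
    norm_coeff_le_div_of_truncNorm_le (by norm_num) hi le_rfl

theorem tendsto_sum_coeff_gaussCompanion {i : ℕ} (hi : i < 4) :
    Tendsto (fun L => ∑ l ∈ Finset.range L, coeff i (gaussCompanion l 0)) atTop
      (𝓝 (∑' k, coeff i (gaussTerm 0 k))) := by
  have hnonneg : ∀ l k, 0 ≤ τ (gaussTerm l k) := fun l k => truncNorm_nonneg (by norm_num) _
  refine tendsto_sum_coeff_of_wz (by norm_num) hi gauss_wz summable_truncNorm_gaussTerm_zero
    truncNorm_gaussTerm_le_zero
    (fun k => tendsto_zero_of_raabe one_half_pos (fun l => hnonneg l k) fun l => ?_) fun l => ?_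
  · have hl : (0 : ℝ) ≤ l := l.cast_nonneg
    have hk : (0 : ℝ) ≤ k := k.cast_nonneg
    have hratio : ((l : ℝ) + 1) * (l + 1 + 1 / 100) * (l + 1 + 1 / 2) ≤
        (l + 1) * ((l + 1 - 1 / 100) * (l + k + 2 - 1 / 100)) := by
      rw [mul_assoc]
      refine mul_le_mul_of_nonneg_left ?_ (by positivity)
      nlinarith [mul_nonneg hl hk]
    exact mul_le_mul_of_ratio_le (by nlinarith) (hnonneg l k) (by linarith)
      (truncNorm_gaussTerm_succ_left_le l k) hratio
  · have hlim := (tendsto_succ_mul_of_raabe one_half_pos (hnonneg 0)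
      truncNorm_gaussTerm_zero_raabe).mul_const
      (1 / ((l : ℝ) + 1) * τ (quadFactor (-2) 0 (l + 1))⁻¹)
    rw [zero_mul] at hlim
    refine squeeze_zero (fun k => truncNorm_nonneg (by norm_num) _) (fun k => ?_) hlim
    have hr : (0 : ℝ) ≤ 1 / 1000 := by norm_num
    refine (truncNorm_mul_le_of_le hr (truncNorm_gaussTerm_le_zero l k)
      (truncNorm_mul_le_of_le hr (truncNorm_C_le hr _) le_rfl)).trans_eq ?_
    rw [Real.norm_of_nonneg (by positivity)]
    ring

end Gauss

/-! ### The main pair -/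

/-- The alternating reciprocal central binomial coefficients, `(-1/4) ^ n (1)_n / (1/2)_n`. -/
noncomputable def altInvCentralBinom (n : ℕ) : ℝ := (-1) ^ n / n.centralBinom

lemma altInvCentralBinom_succ (n : ℕ) :
    altInvCentralBinom (n + 1) = -altInvCentralBinom n * ((n + 1) / (2 * (2 * n + 1))) := by
  have h := congrArg (Nat.cast (R := ℝ)) (Nat.succ_mul_centralBinom_succ n)
  have h0 : (n.centralBinom : ℝ) ≠ 0 := Nat.cast_ne_zero.2 n.centralBinom_ne_zero
  have h1 : ((n + 1).centralBinom : ℝ) ≠ 0 := Nat.cast_ne_zero.2 (n + 1).centralBinom_ne_zero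
  push_cast at h
  rw [altInvCentralBinom, altInvCentralBinom, pow_succ]
  field_simp
  linear_combination h

section Main

local notation "τ" => truncNorm 4 (1 / 1000 : ℝ)

/-- The common part of the two components of the main Wilf–Zeilberger pair. -/
noncomputable def mainCore (n k : ℕ) : ℝ⟦X⟧ :=
  C (altInvCentralBinom n * betaNat (2 * n) k / ((n : ℝ) + k + 1) ^ 2) *
    (quadPoch 5 14 (n + k) * quadPoch (-1) 8 n * quadPoch 2 0 k) *
    (quadPoch 3 10 (n + k + 1) * oddPoch (-2) n * quadPoch 2 0 (2 * n + k + 1))⁻¹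

/-- The summand of the main Wilf–Zeilberger pair. -/
noncomputable def mainTerm (n k : ℕ) : ℝ⟦X⟧ :=
  mainCore n k * (2 * ((n + k + 1 : ℕ) : ℝ⟦X⟧) + 4 * X)

/-- The polynomial numerator of the certificate of the main Wilf–Zeilberger pair. -/
noncomputable def mainNumerator (n j : ℕ) : ℝ⟦X⟧ :=
  ((j : ℝ⟦X⟧) + 2 * X) * (2 * ((j : ℝ⟦X⟧) ^ 2 + 3 * (j : ℝ⟦X⟧) * X + 10 * X ^ 2) +
    (4 * (n : ℝ⟦X⟧) + 3) * ((j : ℝ⟦X⟧) + X) + 2 * ((n : ℝ⟦X⟧) + 1) * (2 * (n : ℝ⟦X⟧) + 1)) +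
  8 * X ^ 2

/-- The companion of `mainTerm`. -/
noncomputable def mainCompanion (n k : ℕ) : ℝ⟦X⟧ :=
  mainCore n k * (C (1 / ((2 * (n : ℝ) + 1) * (2 * n + k + 2))) * mainNumerator n (n + k + 1) *
    (quadFactor (-2) 0 (2 * n + 1) * quadFactor 2 0 (2 * n + k + 2))⁻¹)

lemma mainCore_succ_left (n k : ℕ) : mainCore (n + 1) k = mainCore n k *
    (C (-(((n : ℝ) + 1) ^ 2 * (n + k + 1) ^ 2 * (2 * n + 1)) /
        ((n + k + 2) ^ 2 * (2 * n + 1) * (2 * n + k + 2) * (2 * n + k + 3))) *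
      (quadFactor 5 14 (n + k + 1) * quadFactor (-1) 8 (n + 1)) *
      (quadFactor 3 10 (n + k + 2) * quadFactor (-2) 0 (2 * n + 1) *
        quadFactor 2 0 (2 * n + k + 2) * quadFactor 2 0 (2 * n + k + 3))⁻¹) := by
  have hc : altInvCentralBinom (n + 1) * betaNat (2 * n + 1 + 1) k /
      (((n + 1 : ℕ) : ℝ) + k + 1) ^ 2 =
      altInvCentralBinom n * betaNat (2 * n) k / (n + k + 1) ^ 2 *
        (-(((n : ℝ) + 1) ^ 2 * (n + k + 1) ^ 2 * (2 * n + 1)) /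
          ((n + k + 2) ^ 2 * (2 * n + 1) * (2 * n + k + 2) * (2 * n + k + 3))) := by
    rw [altInvCentralBinom_succ, betaNat_succ_left, betaNat_succ_left]
    push_cast
    field_simp
    ring
  simp only [mainCore, show 2 * (n + 1) = 2 * n + 1 + 1 by ring, hc,
    map_mul C (altInvCentralBinom n * betaNat (2 * n) k / ((n : ℝ) + k + 1) ^ 2), quadPoch_succ,
    oddPoch_succ, PowerSeries.mul_inv_rev, show n + 1 + k = n + k + 1 by ring,
    show 2 * n + 1 + 1 + k + 1 = 2 * n + k + 1 + 1 + 1 by ring]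
  ring

lemma mainCore_succ_right (n k : ℕ) : mainCore n (k + 1) = mainCore n k *
    (C (((k : ℝ) + 1) * (n + k + 1) ^ 2 / ((n + k + 2) ^ 2 * (2 * n + k + 2))) *
      (quadFactor 5 14 (n + k + 1) * quadFactor 2 0 (k + 1)) *
      (quadFactor 3 10 (n + k + 2) * quadFactor 2 0 (2 * n + k + 2))⁻¹) := by
  have hc : altInvCentralBinom n * betaNat (2 * n) (k + 1) / ((n : ℝ) + (k + 1 : ℕ) + 1) ^ 2 =
      altInvCentralBinom n * betaNat (2 * n) k / (n + k + 1) ^ 2 *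
        (((k : ℝ) + 1) * (n + k + 1) ^ 2 / ((n + k + 2) ^ 2 * (2 * n + k + 2))) := by
    rw [betaNat_succ_right]
    push_cast
    field_simp
    ring
  simp only [mainCore, hc,
    map_mul C (altInvCentralBinom n * betaNat (2 * n) k / ((n : ℝ) + k + 1) ^ 2), quadPoch_succ,
    PowerSeries.mul_inv_rev, ← add_assoc]
  ring

lemma mainCore_succ_left_mul (n k : ℕ) : mainCore (n + 1) k *
    ((((n : ℝ⟦X⟧) + (k : ℝ⟦X⟧) + 2) ^ 2 + 3 * ((n : ℝ⟦X⟧) + (k : ℝ⟦X⟧) + 2) * X + 10 * X ^ 2) *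
      (2 * (n : ℝ⟦X⟧) + 1 - 2 * X) * (2 * (n : ℝ⟦X⟧) + (k : ℝ⟦X⟧) + 2 + 2 * X) *
      (2 * (n : ℝ⟦X⟧) + (k : ℝ⟦X⟧) + 3 + 2 * X)) =
    mainCore n k * -((((n : ℝ⟦X⟧) + 1) ^ 2 - ((n : ℝ⟦X⟧) + 1) * X + 8 * X ^ 2) *
      (((n : ℝ⟦X⟧) + (k : ℝ⟦X⟧) + 1) ^ 2 + 5 * ((n : ℝ⟦X⟧) + (k : ℝ⟦X⟧) + 1) * X + 14 * X ^ 2) *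
      (2 * (n : ℝ⟦X⟧) + 1)) := by
  have hB := natCast_sq_mul_quadFactor 3 10 (n + k + 1).succ_ne_zero
  have hE := natCast_mul_quadFactor (-2) (2 * n).succ_ne_zero
  have hP := natCast_mul_quadFactor 2 (2 * n + k + 1).succ_ne_zero
  have hQ := natCast_mul_quadFactor 2 (2 * n + k + 2).succ_ne_zero
  have hA := natCast_sq_mul_quadFactor 5 14 (n + k).succ_ne_zero
  have hD := natCast_sq_mul_quadFactor (-1) 8 n.succ_ne_zero
  simp only [map_neg, map_ofNat, map_one, Nat.succ_eq_add_one, Nat.cast_add, Nat.cast_mul,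
    Nat.cast_ofNat, Nat.cast_one] at hB hE hP hQ hA hD
  refine mul_eq_mul_of_ratio (by positivity) (by simp [constantCoeff_quadFactor])
    (mainCore_succ_left n k) ?_ ?_ <;>
  simp only [map_neg, map_add, map_mul, map_pow, map_natCast, map_ofNat, map_one]
  · linear_combination congrArg₂ HMul.hMul (congrArg₂ HMul.hMul hB hE) (congrArg₂ HMul.hMul hP hQ)
  · linear_combination -(2 * (n : ℝ⟦X⟧) + 1) * congrArg₂ HMul.hMul hD hA

lemma mainCore_succ_right_mul (n k : ℕ) : mainCore n (k + 1) *
    ((((n : ℝ⟦X⟧) + (k : ℝ⟦X⟧) + 2) ^ 2 + 3 * ((n : ℝ⟦X⟧) + (k : ℝ⟦X⟧) + 2) * X + 10 * X ^ 2) *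
      (2 * (n : ℝ⟦X⟧) + (k : ℝ⟦X⟧) + 2 + 2 * X)) =
    mainCore n k *
      ((((n : ℝ⟦X⟧) + (k : ℝ⟦X⟧) + 1) ^ 2 + 5 * ((n : ℝ⟦X⟧) + (k : ℝ⟦X⟧) + 1) * X + 14 * X ^ 2) *
        ((k : ℝ⟦X⟧) + 1 + 2 * X)) := by
  have hB := natCast_sq_mul_quadFactor 3 10 (n + k + 1).succ_ne_zero
  have hP := natCast_mul_quadFactor 2 (2 * n + k + 1).succ_ne_zero
  have hA := natCast_sq_mul_quadFactor 5 14 (n + k).succ_ne_zero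
  have hF := natCast_mul_quadFactor 2 k.succ_ne_zero
  simp only [map_ofNat, Nat.succ_eq_add_one, Nat.cast_add, Nat.cast_mul, Nat.cast_ofNat,
    Nat.cast_one] at hB hP hA hF
  refine mul_eq_mul_of_ratio (by positivity) (by simp [constantCoeff_quadFactor])
    (mainCore_succ_right n k) ?_ ?_ <;>
  simp only [map_add, map_mul, map_pow, map_natCast, map_ofNat, map_one]
  · linear_combination congrArg₂ HMul.hMul hB hP
  · linear_combination congrArg₂ HMul.hMul hA hF

lemma mainCompanion_mul (n k : ℕ) : mainCompanion n k *
    ((2 * (n : ℝ⟦X⟧) + 1 - 2 * X) * (2 * (n : ℝ⟦X⟧) + (k : ℝ⟦X⟧) + 2 + 2 * X)) =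
      mainCore n k * mainNumerator n (n + k + 1) := by
  have hE := natCast_mul_quadFactor (-2) (2 * n).succ_ne_zero
  have hP := natCast_mul_quadFactor 2 (2 * n + k + 1).succ_ne_zero
  simp only [map_neg, map_ofNat, Nat.succ_eq_add_one, Nat.cast_add, Nat.cast_mul,
    Nat.cast_ofNat, Nat.cast_one] at hE hP
  refine mul_eq_mul_of_ratio (by positivity) (by simp [constantCoeff_quadFactor])
    (mainCompanion.eq_1 n k) ?_ (by simp)
  simp only [map_add, map_mul, map_natCast, map_ofNat, map_one]
  linear_combination congrArg₂ HMul.hMul hE hP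

lemma main_wz (n k : ℕ) : mainTerm n k - mainTerm (n + 1) k =
    mainCompanion n k - mainCompanion n (k + 1) := by
  have hne : (((n : ℝ⟦X⟧) + (k : ℝ⟦X⟧) + 2) ^ 2 + 3 * ((n : ℝ⟦X⟧) + (k : ℝ⟦X⟧) + 2) * X +
      10 * X ^ 2) * ((2 * (n : ℝ⟦X⟧) + 1 - 2 * X) * (2 * (n : ℝ⟦X⟧) + (k : ℝ⟦X⟧) + 2 + 2 * X) *
        (2 * (n : ℝ⟦X⟧) + (k : ℝ⟦X⟧) + 3 + 2 * X)) ≠ 0 := by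
    refine ne_zero_of_map (f := constantCoeff) ?_
    simp only [map_mul, map_add, map_sub, map_pow, map_natCast, map_one, map_ofNat,
      constantCoeff_X, mul_zero, sub_zero, add_zero, zero_pow two_ne_zero]
    positivity
  refine mul_right_cancel₀ hne ?_
  have hcomp := mainCompanion_mul n (k + 1)
  rw [Nat.cast_add, Nat.cast_one] at hcomp
  linear_combination (norm := (simp only [mainTerm, mainNumerator]; push_cast; ring))
    -(2 * ((n : ℝ⟦X⟧) + k + 2) + 4 * X) * mainCore_succ_left_mul n k +
    mainNumerator n (n + (k + 1) + 1) * mainCore_succ_right_mul n k +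
    (((n : ℝ⟦X⟧) + k + 2) ^ 2 + 3 * ((n : ℝ⟦X⟧) + k + 2) * X + 10 * X ^ 2) *
      ((2 * (n : ℝ⟦X⟧) + k + 2 + 2 * X) * hcomp -
        (2 * (n : ℝ⟦X⟧) + k + 3 + 2 * X) * mainCompanion_mul n k)

lemma truncNorm_mainCore_succ_left_le (n k : ℕ) :
    τ (mainCore (n + 1) k) ≤ τ (mainCore n k) * (1 / 3) := by
  have hr : (0 : ℝ) ≤ 1 / 1000 := by norm_num
  have hc : ‖-(((n : ℝ) + 1) ^ 2 * (n + k + 1) ^ 2 * (2 * n + 1)) /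
      ((n + k + 2) ^ 2 * (2 * n + 1) * (2 * n + k + 2) * (2 * n + k + 3))‖ ≤ 1 / 4 := by
    rw [neg_div, norm_neg, Real.norm_of_nonneg (by positivity), div_le_div_iff₀ (by positivity)
      four_pos]
    have hlt : ((n : ℝ) + 1) ^ 2 * 4 ≤ (2 * n + k + 2) * (2 * n + k + 3) := by
      nlinarith [(n.cast_nonneg : (0 : ℝ) ≤ n), (k.cast_nonneg : (0 : ℝ) ≤ k)]
    calc ((n : ℝ) + 1) ^ 2 * (n + k + 1) ^ 2 * (2 * n + 1) * 4
        = (((n : ℝ) + 1) ^ 2 * 4) * ((n + k + 1) ^ 2 * (2 * n + 1)) := by ring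
      _ ≤ ((2 * (n : ℝ) + k + 2) * (2 * n + k + 3)) * ((n + k + 2) ^ 2 * (2 * n + 1)) := by
        gcongr
        exact one_le_two
      _ = 1 * (((n : ℝ) + k + 2) ^ 2 * (2 * n + 1) * (2 * n + k + 2) * (2 * n + k + 3)) := by ring
  have hfac : ∀ {a b : ℝ} {j : ℕ}, |a| * (1 / 1000) + |b| * (1 / 1000) ^ 2 ≤ 1 / 100 → 1 ≤ j →
      τ (quadFactor a b j) ≤ 1 + 1 / 100 := fun h hj => truncNorm_quadFactor_le_one_add hr h hj
  have hinv : ∀ {a b : ℝ} {j : ℕ}, |a| * (1 / 1000) + |b| * (1 / 1000) ^ 2 ≤ 1 / 100 → 1 ≤ j →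
      τ (quadFactor a b j)⁻¹ ≤ (1 - 1 / 100)⁻¹ := fun h hj =>
    truncNorm_quadFactor_inv_le_inv_one_sub hr four_pos h (by norm_num) hj
  rw [mainCore_succ_left]
  simp only [PowerSeries.mul_inv_rev]
  have h := truncNorm_mul_le_of_le hr
      (truncNorm_mul_le_of_le hr ((truncNorm_C_le (m := 4) hr _).trans hc)
        (truncNorm_mul_le_of_le hr
          (hfac (a := 5) (b := 14) (j := n + k + 1) (by norm_num) (by omega))
          (hfac (a := -1) (b := 8) (j := n + 1) (by norm_num) (by omega))))
      (truncNorm_mul_le_of_le hr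
        (hinv (a := 2) (b := 0) (j := 2 * n + k + 3) (by norm_num) (by omega)) <|
        truncNorm_mul_le_of_le hr
          (hinv (a := 2) (b := 0) (j := 2 * n + k + 2) (by norm_num) (by omega)) <|
        truncNorm_mul_le_of_le hr
          (hinv (a := -2) (b := 0) (j := 2 * n + 1) (by norm_num) (by omega))
          (hinv (a := 3) (b := 10) (j := n + k + 2) (by norm_num) (by omega)))
  exact truncNorm_mul_le_of_le hr le_rfl (h.trans (by norm_num))

lemma truncNorm_mainCore_zero_succ_le (k : ℕ) :
    ((k + 2) * τ (mainCore 0 (k + 1))) * (k + 2 - 1 / 100) ^ 2 ≤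
      ((k + 1) * τ (mainCore 0 k)) * (k + 1 + 1 / 100) ^ 2 := by
  have hk : (0 : ℝ) ≤ k := k.cast_nonneg
  have hr : (0 : ℝ) ≤ 1 / 1000 := by norm_num
  have h := truncNorm_mul_le_of_le hr (le_refl (τ (mainCore 0 k))) <|
    truncNorm_mul_le_of_le hr
      (truncNorm_mul_le_of_le hr
        (truncNorm_C_le hr (((k : ℝ) + 1) * ((0 : ℕ) + k + 1) ^ 2 /
          (((0 : ℕ) + k + 2) ^ 2 * (2 * (0 : ℕ) + k + 2))))
        (truncNorm_mul_le_of_le hr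
          (truncNorm_quadFactor_le (a := 5) (b := 14) (ε := 1 / 100) hr (by norm_num) (0 + k + 1))
          (truncNorm_quadFactor_le (a := 2) (b := 0) (ε := 1 / 100) hr (by norm_num) (k + 1))))
      (truncNorm_mul_le_of_le hr
        (truncNorm_quadFactor_inv_le (a := 2) (b := 0) (ε := 1 / 100) (j := 2 * 0 + k + 2) hr
          four_pos (by norm_num) (by push_cast; linarith))
        (truncNorm_quadFactor_inv_le (a := 3) (b := 10) (ε := 1 / 100) (j := 0 + k + 2) hr four_pos
          (by norm_num) (by push_cast; linarith)))
  rw [← PowerSeries.mul_inv_rev, ← mainCore_succ_right, Real.norm_of_nonneg (by positivity)] at h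
  push_cast at h
  have hK : (0 : ℝ) < k + 2 - 1 / 100 := by linarith only [hk]
  rw [mul_comm ((k : ℝ) + 2), mul_assoc, ← le_div_iff₀ (by positivity)]
  refine h.trans_eq ?_
  rw [mul_zero, zero_add, one_sub_div (by positivity)]
  field_simp

lemma truncNorm_mainCore_le_pow_mul (n k : ℕ) :
    τ (mainCore n k) ≤ (1 / 3) ^ n * τ (mainCore 0 k) := by
  induction n with
  | zero => simp
  | succ n ih =>
    rw [pow_succ, mul_right_comm]
    exact (truncNorm_mainCore_succ_left_le n k).trans (by gcongr)

lemma succ_mul_one_third_pow_le_one (n : ℕ) : ((n : ℝ) + 1) * (1 / 3) ^ n ≤ 1 := by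
  have h := one_add_mul_le_pow (a := (2 : ℝ)) (by norm_num) n
  rw [one_div, inv_pow, ← div_eq_mul_inv, div_le_one (by positivity)]
  norm_num at h
  linarith [(n.cast_nonneg : (0 : ℝ) ≤ n)]

lemma truncNorm_mainTerm_le (n k : ℕ) :
    τ (mainTerm n k) ≤ 3 * ((n + 1) * (1 / 3) ^ n) * ((k + 1) * τ (mainCore 0 k)) := by
  have hr : (0 : ℝ) ≤ 1 / 1000 := by norm_num
  have hfac : τ (2 * ((n + k + 1 : ℕ) : ℝ⟦X⟧) + 4 * X) ≤ 3 * ((n + 1) * (k + 1)) := by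
    have h0 : τ (2 * ((n + k + 1 : ℕ) : ℝ⟦X⟧)) ≤ 2 * ((n : ℝ) + k + 1) := by
      refine Eq.trans_le ?_ ((truncNorm_C_le (m := 4) hr (2 * ((n : ℝ) + k + 1))).trans_eq
        (Real.norm_of_nonneg (by positivity)))
      simp only [map_mul, map_add, map_natCast, map_ofNat, map_one, Nat.cast_add, Nat.cast_one]
    have h1 : τ (4 * X : ℝ⟦X⟧) ≤ 4 * (1 / 1000) := by
      simpa only [map_ofNat, pow_one, Real.norm_ofNat] using
        truncNorm_C_mul_X_pow_le (m := 4) hr (4 : ℝ) 1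
    have hn : (0 : ℝ) ≤ n := n.cast_nonneg
    have hk : (0 : ℝ) ≤ k := k.cast_nonneg
    nlinarith [truncNorm_add_le (m := 4) hr (2 * ((n + k + 1 : ℕ) : ℝ⟦X⟧)) (4 * X),
      mul_nonneg hn hk]
  refine (truncNorm_mul_le_of_le hr (truncNorm_mainCore_le_pow_mul n k) hfac).trans_eq ?_
  ring

lemma truncNorm_mainNumerator_le {n j : ℕ} (hj : n + 1 ≤ j) :
    τ (mainNumerator n j) ≤ 11 * (j : ℝ) ^ 3 := by
  have hr : (0 : ℝ) ≤ 1 / 1000 := by norm_num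
  let a : ℝ := 2 * j ^ 2 + (4 * n + 3) * j + 2 * (n + 1) * (2 * n + 1)
  let b : ℝ := 6 * j + (4 * n + 3)
  have hexpand : mainNumerator n j = C (j * a) * X ^ 0 + C (j * b + 2 * a) * X ^ 1 +
      C (20 * j + 2 * b + 8) * X ^ 2 + C 40 * X ^ 3 := by
    simp only [a, b, mainNumerator, map_add, map_mul, map_pow, map_natCast, map_ofNat, map_one]
    ring
  have hn : (0 : ℝ) ≤ n := n.cast_nonneg
  have hnj : (n : ℝ) + 1 ≤ j := mod_cast hj
  have ha0 : 0 ≤ a := by positivity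
  have hb0 : 0 ≤ b := by positivity
  have ha : a ≤ 10 * j ^ 2 := by nlinarith [hn]
  have hb : b ≤ 10 * j := by linarith
  have hcoeff : ∀ (c : ℝ) (i : ℕ), 0 ≤ c → τ (C c * X ^ i) ≤ c * (1 / 1000) ^ i := fun c i hc =>
    (truncNorm_C_mul_X_pow_le hr c i).trans_eq (by rw [Real.norm_of_nonneg hc])
  have hja : j * a ≤ 10 * (j : ℝ) ^ 3 := by nlinarith
  have hjb : j * b ≤ 10 * (j : ℝ) ^ 2 := by nlinarith [hb]
  have hj1 : (1 : ℝ) ≤ j ^ 2 := one_le_pow₀ (by linarith)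
  have hj2 : (j : ℝ) ^ 2 ≤ j ^ 3 := pow_le_pow_right₀ (by linarith) (by norm_num)
  have hj3 : (j : ℝ) ≤ j ^ 2 := le_self_pow₀ (by linarith) two_ne_zero
  rw [hexpand]
  linarith [truncNorm_add_le (m := 4) hr (C (j * a) * X ^ 0 + C (j * b + 2 * a) * X ^ 1 +
      C (20 * j + 2 * b + 8) * X ^ 2) (C 40 * X ^ 3),
    truncNorm_add_le (m := 4) hr (C (j * a) * X ^ 0 + C (j * b + 2 * a) * X ^ 1)
      (C (20 * j + 2 * b + 8) * X ^ 2),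
    truncNorm_add_le (m := 4) hr (C (j * a) * X ^ 0) (C (j * b + 2 * a) * X ^ 1),
    hcoeff (j * a) 0 (mul_nonneg j.cast_nonneg ha0), hcoeff (j * b + 2 * a) 1 (by positivity),
    hcoeff (20 * j + 2 * b + 8) 2 (by linarith only [hn, hnj, hb0]), hcoeff 40 3 (by positivity)]

lemma truncNorm_mainCompanion_le (n k : ℕ) : τ (mainCompanion n k) ≤
    (k + 1) * ((k + 1) * τ (mainCore 0 k)) * (12 * (n + 1) ^ 2) := by
  have hr : (0 : ℝ) ≤ 1 / 1000 := by norm_num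
  have hnum := truncNorm_mainNumerator_le (n := n) (j := n + k + 1) (by omega)
  have hinv : ∀ {a : ℝ} {j : ℕ}, |a| ≤ 2 → 1 ≤ j → τ (quadFactor a 0 j)⁻¹ ≤ (1 - 1 / 100)⁻¹ :=
    fun h hj => truncNorm_quadFactor_inv_le_inv_one_sub hr four_pos
      (by rw [abs_zero]; linarith) (by norm_num) hj
  have hcore : τ (mainCore n k) ≤ τ (mainCore 0 k) := by
    refine (truncNorm_mainCore_le_pow_mul n k).trans
      (mul_le_of_le_one_left (truncNorm_nonneg hr _) (pow_le_one₀ ?_ ?_)) <;> norm_num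
  have h := truncNorm_mul_le_of_le hr hcore <| truncNorm_mul_le_of_le hr
    (truncNorm_mul_le_of_le hr
      (truncNorm_C_le hr (1 / ((2 * (n : ℝ) + 1) * (2 * n + k + 2)))) hnum)
    (truncNorm_mul_le_of_le hr
      (hinv (a := 2) (j := 2 * n + k + 2) (by norm_num) (by omega))
      (hinv (a := -2) (j := 2 * n + 1) (by norm_num) (by omega)))
  rw [← PowerSeries.mul_inv_rev] at h
  have hcube : 1 / ((2 * (n : ℝ) + 1) * (2 * n + k + 2)) * (11 * ((n + k + 1 : ℕ) : ℝ) ^ 3) ≤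
      11 * ((n + 1) * (k + 1)) ^ 2 := by
    have hn : (0 : ℝ) ≤ n := n.cast_nonneg
    have hk : (0 : ℝ) ≤ k := k.cast_nonneg
    have hle : (n : ℝ) + k + 1 ≤ (n + 1) * (k + 1) := by nlinarith [mul_nonneg hn hk]
    have hden : (n : ℝ) + k + 1 ≤ (2 * n + 1) * (2 * n + k + 2) := by
      nlinarith [mul_nonneg hn hk]
    rw [one_div_mul_eq_div, div_le_iff₀ (by positivity)]
    push_cast
    calc 11 * ((n : ℝ) + k + 1) ^ 3 = 11 * (n + k + 1) ^ 2 * (n + k + 1) := by ring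
      _ ≤ 11 * ((n + 1) * (k + 1)) ^ 2 * ((2 * (n : ℝ) + 1) * (2 * n + k + 2)) := by gcongr
  rw [Real.norm_of_nonneg (by positivity)] at h
  have h0 : 0 ≤ τ (mainCore 0 k) := truncNorm_nonneg hr _
  calc τ (mainCompanion n k)
      ≤ τ (mainCore 0 k) * (11 * ((n + 1) * (k + 1)) ^ 2 *
          ((1 - 1 / 100)⁻¹ * (1 - 1 / 100)⁻¹)) := h.trans (by gcongr)
    _ ≤ τ (mainCore 0 k) * (12 * ((n + 1) * (k + 1)) ^ 2) := by
      refine mul_le_mul_of_nonneg_left ?_ h0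
      linarith [sq_nonneg (((n : ℝ) + 1) * (k + 1))]
    _ = (k + 1) * ((k + 1) * τ (mainCore 0 k)) * (12 * (n + 1) ^ 2) := by ring

theorem tendsto_sum_coeff_mainCompanion {i : ℕ} (hi : i < 4) :
    Tendsto (fun N => ∑ n ∈ Finset.range N, coeff i (mainCompanion n 0)) atTop
      (𝓝 (∑' k, coeff i (mainTerm 0 k))) := by
  have hnonneg : ∀ k : ℕ, 0 ≤ (k + 1) * τ (mainCore 0 k) := fun k =>
    mul_nonneg (by positivity) (truncNorm_nonneg (by norm_num) _)
  have hraabe : ∀ k : ℕ, (((k + 1 : ℕ) : ℝ) + 1) * τ (mainCore 0 (k + 1)) * (k + 2 + 1 / 2) ≤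
      (k + 1) * τ (mainCore 0 k) * (k + 1) := fun k => by
    have hk : (0 : ℝ) ≤ k := k.cast_nonneg
    rw [show ((k + 1 : ℕ) : ℝ) + 1 = k + 2 by push_cast; ring]
    exact mul_le_mul_of_ratio_le (by nlinarith) (hnonneg k) (by linarith)
      (truncNorm_mainCore_zero_succ_le k) (by nlinarith [mul_nonneg hk hk])
  refine tendsto_sum_coeff_of_wz (r := 1 / 1000) (by norm_num) hi main_wz
    ((summable_of_raabe one_half_pos hnonneg hraabe).mul_left 3) (fun n k => ?_) (fun k => ?_)
    fun n => ?_
  · refine (truncNorm_mainTerm_le n k).trans (mul_le_mul_of_nonneg_right ?_ (hnonneg k))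
    linarith [succ_mul_one_third_pow_le_one n]
  · have hlim : Tendsto (fun n : ℕ => ((n : ℝ) + 1) * (1 / 3) ^ n) atTop (𝓝 0) := by
      simpa only [add_mul, one_mul, add_zero] using
        (tendsto_self_mul_const_pow_of_lt_one (r := (1 / 3 : ℝ)) (by norm_num) (by norm_num)).add
          (tendsto_pow_atTop_nhds_zero_of_lt_one (r := (1 / 3 : ℝ)) (by norm_num) (by norm_num))
    refine squeeze_zero (fun n => truncNorm_nonneg (by norm_num) _)
      (fun n => truncNorm_mainTerm_le n k) ?_
    simpa using (hlim.const_mul 3).mul_const ((k + 1) * τ (mainCore 0 k))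
  · refine squeeze_zero (fun k => truncNorm_nonneg (by norm_num) _)
      (fun k => truncNorm_mainCompanion_le n k) ?_
    simpa using (tendsto_succ_mul_of_raabe one_half_pos hnonneg hraabe).mul_const
      (12 * ((n : ℝ) + 1) ^ 2)

end Main

/-! ### Boundary terms modulo `X ^ 4` -/

section Boundary

local notation:max "ξ" j:max => C (1 / ((j : ℕ) : ℝ)) * (X : ℝ⟦X⟧)

lemma smodEq_of_eq_add {R : Type*} [CommRing R] {f g d : R} (c : R) (h : f = g + d * c) :
    f ≡ g [SMOD Ideal.span {d}] := by
  rw [SModEq.sub_mem, Ideal.mem_span_singleton, h, add_sub_cancel_left]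
  exact dvd_mul_right d c

lemma smodEq_of_mul_smodEq_mul {K : Type*} [Field K] {I : Ideal K⟦X⟧} {f g P : K⟦X⟧}
    (hP : constantCoeff P ≠ 0) (h : f * P ≡ g * P [SMOD I]) : f ≡ g [SMOD I] := by
  simpa only [mul_assoc, PowerSeries.mul_inv_cancel P hP, mul_one] using
    h.mul (SModEq.refl P⁻¹)

lemma coeff_eq_of_smodEq {R : Type*} [CommRing R] {i m : ℕ} {f g : R⟦X⟧} (hi : i < m)
    (h : f ≡ g [SMOD Ideal.span {X ^ m}]) : coeff i f = coeff i g := by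
  rw [SModEq.sub_mem, Ideal.mem_span_singleton, X_pow_dvd_iff] at h
  simpa only [map_sub, sub_eq_zero] using h i hi

lemma coeff_three_cubic (a b c d : ℝ) :
    coeff 3 (C a + C b * X + C c * X ^ 2 + C d * X ^ 3 : ℝ⟦X⟧) = d := by
  simp [coeff_X_pow]

lemma C_div_pow (a y : ℝ) (s : ℕ) : (C (a / y ^ s) : ℝ⟦X⟧) = C a * C (1 / y) ^ s := by
  rw [← map_pow, ← map_mul, one_div_pow, mul_one_div]

lemma genHarmonic_zero (s : ℕ) : genHarmonic s 0 = 0 := Finset.sum_range_zero _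

lemma genHarmonic_succ (s n : ℕ) :
    genHarmonic s (n + 1) = genHarmonic s n + 1 / ((n : ℝ) + 1) ^ s :=
  Finset.sum_range_succ _ _

lemma sum_div_pow_eq_mul_genHarmonic (a : ℝ) (s n : ℕ) :
    ∑ j ∈ Finset.range n, a / ((j + 1 : ℕ) : ℝ) ^ s = a * genHarmonic s n := by
  simp only [genHarmonic, Finset.mul_sum, mul_one_div, Nat.cast_add, Nat.cast_one]

lemma prod_smodEq_genHarmonic {F G : ℕ → ℝ⟦X⟧} {a b : ℝ}
    (h : ∀ j, F j ≡ (1 + (C a * ξ j ^ 2 + C b * ξ j ^ 3)) *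
      G j [SMOD Ideal.span {X ^ 4}]) (n : ℕ) :
    ∏ j ∈ Finset.range n, F (j + 1) ≡
      (1 + (C (a * genHarmonic 2 n) * X ^ 2 + C (b * genHarmonic 3 n) * X ^ 3)) *
        ∏ j ∈ Finset.range n, G (j + 1) [SMOD Ideal.span {X ^ 4}] := by
  rw [← sum_div_pow_eq_mul_genHarmonic, ← sum_div_pow_eq_mul_genHarmonic, map_sum, map_sum,
    Finset.sum_mul, Finset.sum_mul, ← Finset.sum_add_distrib,
    show (X : ℝ⟦X⟧) ^ 4 = (X ^ 2) ^ 2 by ring]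
  refine prod_smodEq_of_smodEq _ (fun j _ => ?_) fun j _ => ?_
  · exact dvd_add (Dvd.intro_left _ rfl)
      (Dvd.intro (C (b / ((j + 1 : ℕ) : ℝ) ^ 3) * X) (by ring))
  · rw [← pow_mul]
    have hj := h (j + 1)
    rwa [mul_pow, mul_pow, ← mul_assoc, ← C_div_pow, ← mul_assoc, ← C_div_pow] at hj

lemma quadPoch_five_smodEq (m : ℕ) :
    quadPoch 5 14 m * quadPoch (-1) 8 m * quadPoch (-1) 0 m ≡
      (1 + C (3 * genHarmonic 2 m) * X ^ 2) * quadPoch 3 10 m [SMOD Ideal.span {X ^ 4}] := by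
  simpa only [quadPoch, ← Finset.prod_mul_distrib, map_zero, zero_mul, add_zero] using
    prod_smodEq_genHarmonic (a := 3) (b := 0)
      (F := fun j => quadFactor 5 14 j * quadFactor (-1) 8 j * quadFactor (-1) 0 j)
      (G := quadFactor 3 10) (fun j => smodEq_of_eq_add
        (C (1 / (j : ℝ)) ^ 4 * (56 - 112 * ξ j)) (by
          simp only [quadFactor, map_neg, map_zero, map_one, map_ofNat]
          ring)) m

lemma one_smodEq_quadPoch_neg_four (n : ℕ) :
    1 ≡ (1 + C (4 * genHarmonic 2 n) * X ^ 2) * quadPoch 0 (-4) n [SMOD Ideal.span {X ^ 4}] := by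
  simpa only [quadPoch, Finset.prod_const_one, map_zero, zero_mul, add_zero] using
    prod_smodEq_genHarmonic (a := 4) (b := 0) (F := fun _ => 1) (G := quadFactor 0 (-4))
      (fun j => smodEq_of_eq_add (C (1 / (j : ℝ)) ^ 4 * 16) (by
          simp only [quadFactor, map_neg, map_zero, map_ofNat]
          ring)) n

lemma quadPoch_one_neg_two_smodEq (l : ℕ) :
    quadPoch 1 (-2) l ≡
      (1 + (C (4 * genHarmonic 2 l) * X ^ 2 + C (-4 * genHarmonic 3 l) * X ^ 3)) *
        (quadPoch (-2) 0 l * quadPoch 3 0 l) [SMOD Ideal.span {X ^ 4}] := by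
  simpa only [quadPoch, ← Finset.prod_mul_distrib] using
    prod_smodEq_genHarmonic (a := 4) (b := -4) (F := quadFactor 1 (-2))
      (G := fun j => quadFactor (-2) 0 j * quadFactor 3 0 j) (fun j => smodEq_of_eq_add
        (C (1 / (j : ℝ)) ^ 4 * (28 - 24 * ξ j)) (by
          simp only [quadFactor, map_neg, map_zero, map_one, map_ofNat]
          ring)) l

lemma quadPoch_five_fourteen_smodEq (k : ℕ) :
    quadPoch 5 14 k * quadPoch 3 0 k ≡ (1 + C (-20 * genHarmonic 3 k) * X ^ 3) *
      (quadPoch 5 4 k * quadPoch 3 10 k) [SMOD Ideal.span {X ^ 4}] := by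
  simpa only [quadPoch, ← Finset.prod_mul_distrib, map_zero, zero_mul, zero_add] using
    prod_smodEq_genHarmonic (a := 0) (b := -20)
      (F := fun j => quadFactor 5 14 j * quadFactor 3 0 j)
      (G := fun j => quadFactor 5 4 j * quadFactor 3 10 j) (fun j => smodEq_of_eq_add
        (C (1 / (j : ℝ)) ^ 4 * (120 + 580 * ξ j +
          1240 * ξ j ^ 2 + 800 * ξ j ^ 3)) (by
          simp only [quadFactor, map_neg, map_zero, map_ofNat]
          ring)) k

lemma quadPoch_five_four_smodEq (k : ℕ) :
    quadPoch 5 4 k ≡ (1 + C (2 * genHarmonic 1 k) * X) * quadPoch 3 0 k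
      [SMOD Ideal.span {X ^ 2}] := by
  rw [← sum_div_pow_eq_mul_genHarmonic, map_sum, Finset.sum_mul]
  refine prod_smodEq_of_smodEq _ (fun j _ => dvd_mul_left _ _) fun j _ =>
    smodEq_of_eq_add (-2 * C (1 / ((j + 1 : ℕ) : ℝ)) ^ 2) ?_
  simp only [C_div_pow, quadFactor, map_zero, map_ofNat]
  ring

lemma mainNumerator_smodEq (n : ℕ) : mainNumerator n (n + 1) ≡
    C (((n : ℝ) + 1) ^ 2) * (C (10 * n + 7 : ℝ) - C (5 * (2 * n + 1) : ℝ) * ξ (n + 1) -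
      C (90 * n + 53 : ℝ) * ξ (n + 1) ^ 2 + C (155 * (2 * n + 1) : ℝ) * ξ (n + 1) ^ 3) *
      (quadFactor 5 14 (n + 1) * quadFactor (-1) 8 (n + 1)) [SMOD Ideal.span {X ^ 4}] := by
  have hz : (X : ℝ⟦X⟧) = ((n + 1 : ℕ) : ℝ⟦X⟧) * ξ (n + 1) := by
    rw [← mul_assoc, natCast_mul_C_one_div n.succ_ne_zero, one_mul]
  have hnum : ∀ z : ℝ⟦X⟧, X = ((n + 1 : ℕ) : ℝ⟦X⟧) * z → mainNumerator n (n + 1) =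
      ((n : ℝ⟦X⟧) + 1) ^ 2 * ((2 * n + 2) * (1 + 2 * z) * (1 + 3 * z + 10 * z ^ 2) +
        (4 * n + 3) * (1 + 2 * z) * (1 + z) + 2 * (2 * n + 1) * (1 + 2 * z) + 8 * z ^ 2) := by
    intro z hz
    rw [mainNumerator, hz]
    push_cast
    ring
  refine smodEq_of_eq_add (((n : ℝ⟦X⟧) + 1) ^ 2 * C (1 / ((n + 1 : ℕ) : ℝ)) ^ 4 *
    (197 - 570 * (n + 1) + (1113 - 1810 * (n + 1)) * ξ (n + 1) +
      (2020 * (n + 1) - 114) * ξ (n + 1) ^ 2 +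
      (17360 - 34720 * (n + 1)) * ξ (n + 1) ^ 3)) ?_
  rw [hnum _ hz]
  simp only [quadFactor, map_add, map_mul, map_pow, map_neg, map_one, map_natCast, map_ofNat]
  ring

lemma mainCompanion_zero_mul (n : ℕ) :
    mainCompanion n 0 * (quadPoch 3 10 (n + 1) * quadPoch 0 (-4) (2 * (n + 1)) *
        (quadFactor 5 14 (n + 1) * quadFactor (-1) 8 (n + 1))) =
      C (-altInvCentralBinom (n + 1) / ((n + 1) ^ 4 * (2 * n + 1))) *
        (quadPoch 5 14 (n + 1) * quadPoch (-1) 8 (n + 1) * quadPoch (-1) 0 (n + 1)) *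
        mainNumerator n (n + 1) := by
  have hpoch : quadPoch 0 (-4) (2 * (n + 1)) =
      quadPoch 2 0 (2 * n + 1) * quadFactor 2 0 (2 * n + 2) *
        (oddPoch (-2) n * quadFactor (-2) 0 (2 * n + 1) * quadPoch (-1) 0 (n + 1)) := by
    have hodd := oddPoch_mul_quadPoch (-1) (n + 1)
    have hneg := quadPoch_mul_quadPoch_neg 2 (2 * (n + 1))
    norm_num at hodd hneg
    rw [← oddPoch_succ, ← hneg, ← hodd, ← quadPoch_succ]
    rfl
  have hconst : altInvCentralBinom n * betaNat (2 * n) 0 / ((n : ℝ) + (0 : ℕ) + 1) ^ 2 *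
      (1 / ((2 * (n : ℝ) + 1) * (2 * n + (0 : ℕ) + 2))) =
      -altInvCentralBinom (n + 1) / ((n + 1) ^ 4 * (2 * n + 1)) := by
    rw [altInvCentralBinom_succ, betaNat_zero_right]
    push_cast
    field_simp
    ring
  have hD : quadPoch 3 10 (n + 1) * oddPoch (-2) n * quadPoch 2 0 (2 * n + 1) *
      (quadPoch 3 10 (n + 1) * oddPoch (-2) n * quadPoch 2 0 (2 * n + 1))⁻¹ = 1 :=
    PowerSeries.mul_inv_cancel _ (by simp [constantCoeff_quadPoch, constantCoeff_oddPoch])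
  have hE : quadFactor (-2) 0 (2 * n + 1) * quadFactor 2 0 (2 * n + 2) *
      (quadFactor (-2) 0 (2 * n + 1) * quadFactor 2 0 (2 * n + 2))⁻¹ = 1 :=
    PowerSeries.mul_inv_cancel _ (by simp [constantCoeff_quadFactor])
  rw [mainCompanion, mainCore, hpoch, ← hconst, map_mul, quadPoch_succ 5, quadPoch_succ (-1) 8]
  simp only [add_zero, quadPoch_zero, mul_one]
  linear_combination C (altInvCentralBinom n * betaNat (2 * n) 0 / ((n : ℝ) + (0 : ℕ) + 1) ^ 2) *
      C (1 / ((2 * (n : ℝ) + 1) * (2 * n + (0 : ℕ) + 2))) * mainNumerator n (n + 1) *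
      (quadPoch 5 14 n * quadPoch (-1) 8 n) * quadFactor 5 14 (n + 1) * quadFactor (-1) 8 (n + 1) *
      quadPoch (-1) 0 (n + 1) * congrArg₂ HMul.hMul hD hE

lemma mainCompanion_zero_smodEq (n : ℕ) : mainCompanion n 0 ≡
    C (-altInvCentralBinom (n + 1) / ((n + 1) ^ 2 * (2 * n + 1))) *
      (1 + C (3 * genHarmonic 2 (n + 1) + 4 * genHarmonic 2 (2 * (n + 1))) * X ^ 2) *
      (C (10 * n + 7 : ℝ) - C (5 * (2 * n + 1) : ℝ) * ξ (n + 1) -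
        C (90 * n + 53 : ℝ) * ξ (n + 1) ^ 2 + C (155 * (2 * n + 1) : ℝ) * ξ (n + 1) ^ 3)
      [SMOD Ideal.span {X ^ 4}] := by
  have hprod : quadPoch 5 14 (n + 1) * quadPoch (-1) 8 (n + 1) * quadPoch (-1) 0 (n + 1) ≡
      (1 + C (3 * genHarmonic 2 (n + 1) + 4 * genHarmonic 2 (2 * (n + 1))) * X ^ 2) *
        (quadPoch 3 10 (n + 1) * quadPoch 0 (-4) (2 * (n + 1))) [SMOD Ideal.span {X ^ 4}] := by
    have h := (quadPoch_five_smodEq (n + 1)).mul (one_smodEq_quadPoch_neg_four (2 * (n + 1)))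
    rw [mul_one] at h
    refine h.trans (smodEq_of_eq_add (C (3 * genHarmonic 2 (n + 1)) *
      C (4 * genHarmonic 2 (2 * (n + 1))) *
        (quadPoch 3 10 (n + 1) * quadPoch 0 (-4) (2 * (n + 1)))) ?_)
    rw [map_add]
    ring
  refine smodEq_of_mul_smodEq_mul (P := quadPoch 3 10 (n + 1) * quadPoch 0 (-4) (2 * (n + 1)) *
    (quadFactor 5 14 (n + 1) * quadFactor (-1) 8 (n + 1)))
    (by simp [constantCoeff_quadPoch, constantCoeff_quadFactor]) ?_
  have hconst : -altInvCentralBinom (n + 1) / (((n : ℝ) + 1) ^ 2 * (2 * n + 1)) =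
      -altInvCentralBinom (n + 1) / ((n + 1) ^ 4 * (2 * n + 1)) * (n + 1) ^ 2 := by field_simp
  rw [mainCompanion_zero_mul, hconst, map_mul]
  refine ((SModEq.rfl.mul hprod).mul (mainNumerator_smodEq n)).trans (smodEq_of_eq_add 0 ?_)
  ring

theorem coeff_three_mainCompanion_zero (n : ℕ) :
    coeff 3 (mainCompanion n 0) = altInvCentralBinom (n + 1) *
      (5 * (3 * genHarmonic 2 (n + 1) + 4 * genHarmonic 2 (2 * (n + 1))) / (n + 1) ^ 3 -
        155 / (n + 1) ^ 5) := by
  let c := -altInvCentralBinom (n + 1) / (((n : ℝ) + 1) ^ 2 * (2 * n + 1))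
  let h := 3 * genHarmonic 2 (n + 1) + 4 * genHarmonic 2 (2 * (n + 1))
  let w := 1 / ((n + 1 : ℕ) : ℝ)
  have hcubic : C c * (1 + C h * X ^ 2) * (C (10 * n + 7 : ℝ) - C (5 * (2 * n + 1) : ℝ) *
      ξ (n + 1) - C (90 * n + 53 : ℝ) * ξ (n + 1) ^ 2 +
        C (155 * (2 * n + 1) : ℝ) * ξ (n + 1) ^ 3) ≡
      C (c * (10 * n + 7)) + C (c * -(5 * (2 * n + 1) * w)) * X +
        C (c * (h * (10 * n + 7) - (90 * n + 53) * w ^ 2)) * X ^ 2 +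
        C (c * (155 * (2 * n + 1) * w ^ 3 - h * (5 * (2 * n + 1) * w))) * X ^ 3
        [SMOD Ideal.span {(X : ℝ⟦X⟧) ^ 4}] := by
    refine smodEq_of_eq_add (C c * C h * (C (155 * (2 * n + 1) : ℝ) * C w ^ 3 * X -
      C (90 * n + 53 : ℝ) * C w ^ 2)) ?_
    simp only [w, map_add, map_sub, map_neg, map_mul, map_pow]
    ring
  rw [coeff_eq_of_smodEq (by norm_num) ((mainCompanion_zero_smodEq n).trans hcubic),
    coeff_three_cubic]
  simp only [c, h, w]
  push_cast
  field_simp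
  ring

lemma gaussCompanion_zero_smodEq (l : ℕ) : gaussCompanion l 0 ≡
    C (1 / ((l : ℝ) + 1) ^ 2) *
      (1 + (C (4 * genHarmonic 2 l) * X ^ 2 + C (-4 * genHarmonic 3 l) * X ^ 3)) *
      (1 - ξ (l + 1) + 7 * ξ (l + 1) ^ 2 - 13 * ξ (l + 1) ^ 3) [SMOD Ideal.span {X ^ 4}] := by
  have hmul : gaussCompanion l 0 * (quadPoch (-2) 0 l * quadPoch 3 0 l *
      (quadFactor (-2) 0 (l + 1) * quadFactor 3 0 (l + 1))) =
      C (1 / ((l : ℝ) + 1) ^ 2) * quadPoch 1 (-2) l := by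
    have hconst : betaNat l 0 / (((0 : ℕ) : ℝ) + 1) * ((((0 : ℕ) : ℝ) + 1) / (l + 1)) =
        1 / ((l : ℝ) + 1) ^ 2 := by
      rw [betaNat_zero_right]
      push_cast
      field_simp
    have hD : quadPoch (-2) 0 l * quadPoch 3 0 (l + 1) *
        (quadPoch (-2) 0 l * quadPoch 3 0 (l + 1))⁻¹ = 1 :=
      PowerSeries.mul_inv_cancel _ (by simp [constantCoeff_quadPoch])
    rw [quadPoch_succ] at hD
    rw [gaussCompanion, gaussTerm, ← hconst, map_mul, quadPoch_zero, add_zero, quadPoch_succ]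
    linear_combination C (betaNat l 0 / (((0 : ℕ) : ℝ) + 1)) *
      C ((((0 : ℕ) : ℝ) + 1) / ((l : ℝ) + 1)) * quadPoch 1 (-2) l *
        congrArg₂ HMul.hMul hD (quadFactor_mul_inv (-2) 0 (l + 1))
  have hinv : 1 ≡ (1 - ξ (l + 1) + 7 * ξ (l + 1) ^ 2 - 13 * ξ (l + 1) ^ 3) *
      (quadFactor (-2) 0 (l + 1) * quadFactor 3 0 (l + 1)) [SMOD Ideal.span {X ^ 4}] := by
    refine smodEq_of_eq_add (C (1 / ((l + 1 : ℕ) : ℝ)) ^ 4 * (55 - 78 * ξ (l + 1))) ?_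
    simp only [quadFactor, map_neg, map_zero, map_ofNat]
    ring
  refine smodEq_of_mul_smodEq_mul (P := quadPoch (-2) 0 l * quadPoch 3 0 l *
      (quadFactor (-2) 0 (l + 1) * quadFactor 3 0 (l + 1)))
    (by simp [constantCoeff_quadPoch, constantCoeff_quadFactor]) ?_
  rw [hmul, ← mul_one (C (1 / ((l : ℝ) + 1) ^ 2) * quadPoch 1 (-2) l)]
  refine ((SModEq.rfl.mul (quadPoch_one_neg_two_smodEq l)).mul hinv).trans (smodEq_of_eq_add 0 ?_)
  ring

theorem coeff_three_gaussCompanion_zero (l : ℕ) :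
    coeff 3 (gaussCompanion l 0) = -(13 / ((l : ℝ) + 1) ^ 5 +
      4 * genHarmonic 2 l / (l + 1) ^ 3 + 4 * genHarmonic 3 l / (l + 1) ^ 2) := by
  let c := 1 / ((l : ℝ) + 1) ^ 2
  let a := 4 * genHarmonic 2 l
  let b := -4 * genHarmonic 3 l
  let w := 1 / ((l + 1 : ℕ) : ℝ)
  have hcubic : C c * (1 + (C a * X ^ 2 + C b * X ^ 3)) *
      (1 - ξ (l + 1) + 7 * ξ (l + 1) ^ 2 - 13 * ξ (l + 1) ^ 3) ≡
      C c + C (c * -w) * X + C (c * (7 * w ^ 2 + a)) * X ^ 2 +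
        C (c * (b - a * w - 13 * w ^ 3)) * X ^ 3 [SMOD Ideal.span {(X : ℝ⟦X⟧) ^ 4}] := by
    refine smodEq_of_eq_add (C c * (C a * (7 * C w ^ 2 - 13 * C w ^ 3 * X) +
      C b * (-C w + 7 * C w ^ 2 * X - 13 * C w ^ 3 * X ^ 2))) ?_
    simp only [w, map_add, map_sub, map_neg, map_mul, map_pow, map_ofNat]
    ring
  rw [coeff_eq_of_smodEq (by norm_num) ((gaussCompanion_zero_smodEq l).trans hcubic),
    coeff_three_cubic]
  simp only [c, a, b, w]
  push_cast
  field_simp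
  ring

lemma mainTerm_zero_mul (k : ℕ) :
    mainTerm 0 k * quadPoch 3 10 (k + 1) = C (2 / ((k : ℝ) + 1) ^ 2) * quadPoch 5 14 k := by
  have hfactor : 2 * ((0 + k + 1 : ℕ) : ℝ⟦X⟧) + 4 * X =
      C (2 * ((k : ℝ) + 1)) * quadFactor 2 0 (k + 1) := by
    have h := natCast_mul_quadFactor 2 k.succ_ne_zero
    simp only [Nat.succ_eq_add_one, Nat.cast_add, Nat.cast_one, map_ofNat] at h
    simp only [map_mul, map_add, map_natCast, map_one, map_ofNat]
    push_cast
    linear_combination -2 * h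
  have hconst : altInvCentralBinom 0 * betaNat (2 * 0) k / (((0 : ℕ) : ℝ) + k + 1) ^ 2 *
      (2 * ((k : ℝ) + 1)) = 2 / (k + 1) ^ 2 := by
    rw [mul_zero, betaNat_zero_left, altInvCentralBinom]
    norm_num
    field_simp
  have hD : quadPoch 3 10 (k + 1) * quadPoch 2 0 (k + 1) *
      (quadPoch 3 10 (k + 1) * quadPoch 2 0 (k + 1))⁻¹ = 1 :=
    PowerSeries.mul_inv_cancel _ (by simp [constantCoeff_quadPoch])
  rw [mainTerm, mainCore, hfactor, ← hconst, map_mul C (_ * _ / _)]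
  simp only [mul_zero, zero_add, quadPoch_zero, oddPoch_zero, mul_one]
  linear_combination (norm := (simp only [quadPoch_succ 2]; ring))
    C (altInvCentralBinom 0 * betaNat 0 k / (((0 : ℕ) : ℝ) + k + 1) ^ 2) *
      C (2 * ((k : ℝ) + 1)) * quadPoch 5 14 k * hD

lemma gaussTerm_zero_mul (k : ℕ) :
    gaussTerm 0 k * quadPoch 3 0 (k + 1) = C (1 / ((k : ℝ) + 1) ^ 2) * quadPoch 5 4 k := by
  have hconst : betaNat 0 k / ((k : ℝ) + 1) = 1 / (k + 1) ^ 2 := by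
    rw [betaNat_zero_left]
    field_simp
  rw [gaussTerm, hconst]
  simp only [zero_add, quadPoch_zero, one_mul, mul_one]
  rw [mul_assoc, mul_comm _⁻¹, quadPoch_mul_inv, mul_one]

lemma gaussTerm_zero_smodEq (k : ℕ) : gaussTerm 0 k ≡ C (1 / ((k : ℝ) + 1) ^ 2) *
    (1 + C (2 * genHarmonic 1 k - 3 / (k + 1)) * X) [SMOD Ideal.span {X ^ 2}] := by
  refine smodEq_of_mul_smodEq_mul (P := quadPoch 3 0 (k + 1))
    (by simp [constantCoeff_quadPoch]) ?_
  rw [gaussTerm_zero_mul, mul_assoc]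
  refine SModEq.rfl.mul ((quadPoch_five_four_smodEq k).trans
    (smodEq_of_eq_add (C (3 / ((k : ℝ) + 1)) * (C (3 / ((k : ℝ) + 1)) -
      C (2 * genHarmonic 1 k)) * quadPoch 3 0 k) ?_))
  have hC : (C (3 / ((k : ℝ) + 1)) : ℝ⟦X⟧) = 3 * C (1 / ((k + 1 : ℕ) : ℝ)) := by
    rw [← map_ofNat C, ← map_mul, mul_one_div, Nat.cast_add, Nat.cast_one]
  rw [quadPoch_succ, map_sub, hC]
  simp only [quadFactor, map_zero, map_ofNat]
  ring

theorem mainTerm_zero_smodEq (k : ℕ) : mainTerm 0 k ≡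
    2 * (1 + C (-20 * genHarmonic 3 k) * X ^ 3) * (1 - 10 * ξ (k + 1) ^ 2 + 30 * ξ (k + 1) ^ 3) *
      gaussTerm 0 k [SMOD Ideal.span {X ^ 4}] := by
  have hfactor : quadFactor 3 0 (k + 1) ≡ (1 - 10 * ξ (k + 1) ^ 2 + 30 * ξ (k + 1) ^ 3) *
      quadFactor 3 10 (k + 1) [SMOD Ideal.span {X ^ 4}] := by
    refine smodEq_of_eq_add (C (1 / ((k + 1 : ℕ) : ℝ)) ^ 4 * (10 - 300 * ξ (k + 1))) ?_
    simp only [quadFactor, map_zero, map_ofNat]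
    ring
  have hconst : (C (2 / ((k : ℝ) + 1) ^ 2) : ℝ⟦X⟧) = 2 * C (1 / ((k : ℝ) + 1) ^ 2) := by
    rw [← map_ofNat C, ← map_mul, mul_one_div]
  refine smodEq_of_mul_smodEq_mul (P := quadPoch 3 10 (k + 1) * quadPoch 3 0 k)
    (by simp [constantCoeff_quadPoch]) ?_
  have h := gaussTerm_zero_mul k
  rw [quadPoch_succ] at h
  calc mainTerm 0 k * (quadPoch 3 10 (k + 1) * quadPoch 3 0 k)
      = C (2 / ((k : ℝ) + 1) ^ 2) * (quadPoch 5 14 k * quadPoch 3 0 k) := by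
        rw [← mul_assoc, mainTerm_zero_mul, mul_assoc]
    _ ≡ C (2 / ((k : ℝ) + 1) ^ 2) * ((1 + C (-20 * genHarmonic 3 k) * X ^ 3) *
        (quadPoch 5 4 k * quadPoch 3 10 k)) [SMOD Ideal.span {X ^ 4}] :=
      SModEq.rfl.mul (quadPoch_five_fourteen_smodEq k)
    _ = 2 * (1 + C (-20 * genHarmonic 3 k) * X ^ 3) *
        (gaussTerm 0 k * quadPoch 3 0 k * quadPoch 3 10 k) * quadFactor 3 0 (k + 1) := by
      rw [hconst]
      linear_combination -2 * (1 + C (-20 * genHarmonic 3 k) * X ^ 3) * quadPoch 3 10 k * h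
    _ ≡ 2 * (1 + C (-20 * genHarmonic 3 k) * X ^ 3) *
        (gaussTerm 0 k * quadPoch 3 0 k * quadPoch 3 10 k) *
          ((1 - 10 * ξ (k + 1) ^ 2 + 30 * ξ (k + 1) ^ 3) * quadFactor 3 10 (k + 1))
        [SMOD Ideal.span {X ^ 4}] := SModEq.rfl.mul hfactor
    _ = 2 * (1 + C (-20 * genHarmonic 3 k) * X ^ 3) *
        (1 - 10 * ξ (k + 1) ^ 2 + 30 * ξ (k + 1) ^ 3) * gaussTerm 0 k *
          (quadPoch 3 10 (k + 1) * quadPoch 3 0 k) := by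
      rw [quadPoch_succ]
      ring

theorem coeff_three_mainTerm_zero (k : ℕ) : coeff 3 (mainTerm 0 k) =
    2 * (coeff 3 (gaussTerm 0 k) + 60 / ((k : ℝ) + 1) ^ 5 -
      20 * (genHarmonic 1 k / (k + 1) ^ 4) - 20 * (genHarmonic 3 k / (k + 1) ^ 2)) := by
  let w := 1 / ((k + 1 : ℕ) : ℝ)
  let b := -20 * genHarmonic 3 k
  have hexpand : 2 * (1 + C b * X ^ 3) * (1 - 10 * ξ (k + 1) ^ 2 + 30 * ξ (k + 1) ^ 3) *
      gaussTerm 0 k ≡ C 2 * gaussTerm 0 k - C (20 * w ^ 2) * (X ^ 2 * gaussTerm 0 k) +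
        C (2 * b + 60 * w ^ 3) * (X ^ 3 * gaussTerm 0 k) [SMOD Ideal.span {X ^ 4}] := by
    refine smodEq_of_eq_add (C b * (60 * C w ^ 3 * X ^ 2 - 20 * C w ^ 2 * X) * gaussTerm 0 k) ?_
    simp only [w, map_add, map_mul, map_pow, map_ofNat]
    ring
  have hg : ∀ i < 2, coeff i (gaussTerm 0 k) = coeff i (C (1 / ((k : ℝ) + 1) ^ 2) *
      (1 + C (2 * genHarmonic 1 k - 3 / (k + 1)) * X)) := fun i hi =>
    coeff_eq_of_smodEq hi (gaussTerm_zero_smodEq k)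
  have hg0 := hg 0 two_pos
  have hg1 := hg 1 one_lt_two
  simp only [coeff_C_mul, map_add, coeff_one, coeff_X, zero_ne_one, one_ne_zero, if_true, if_false]
    at hg0 hg1
  rw [coeff_eq_of_smodEq (by norm_num) ((mainTerm_zero_smodEq k).trans hexpand), map_add, map_sub,
    coeff_C_mul, coeff_C_mul, coeff_C_mul]
  simp only [coeff_X_pow_mul', Nat.reduceLeDiff, Nat.reduceSub, le_refl, if_true, hg0, hg1, w, b]
  push_cast
  field_simp
  ring

end Boundary

/-! ### The Koecher pair -/

section Zeta

/-- The value `ζ(p)` of the Riemann zeta function at a natural number, as a real number. For `p ≤ 1`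
the series diverges and the value is `0`. -/
noncomputable def realZeta (p : ℕ) : ℝ := ∑' k : ℕ, 1 / ((k : ℝ) + 1) ^ p

variable {p : ℕ}

lemma hasSum_realZeta (hp : 1 < p) : HasSum (fun k : ℕ => 1 / ((k : ℝ) + 1) ^ p) (realZeta p) := by
  have h := (summable_nat_add_iff 1).2 (Real.summable_one_div_nat_pow.2 hp)
  push_cast at h
  exact h.hasSum

lemma ofReal_realZeta (hp : 1 < p) : (realZeta p : ℂ) = riemannZeta p := by
  rw [zeta_eq_tsum_one_div_nat_add_one_cpow (by simpa using hp), realZeta, Complex.ofReal_tsum]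
  simp

lemma realZeta_two : realZeta 2 = Real.pi ^ 2 / 6 := by
  have h := ofReal_realZeta one_lt_two
  rw [Nat.cast_ofNat, riemannZeta_two] at h
  exact_mod_cast h

lemma genHarmonic_nonneg (s n : ℕ) : 0 ≤ genHarmonic s n :=
  Finset.sum_nonneg fun _ _ => by positivity

lemma genHarmonic_le_realZeta (hp : 1 < p) (n : ℕ) : genHarmonic p n ≤ realZeta p :=
  sum_le_hasSum _ (fun _ _ => by positivity) (hasSum_realZeta hp)

lemma genHarmonic_two_le (n : ℕ) : genHarmonic 2 n ≤ 2 := by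
  have h := genHarmonic_le_realZeta one_lt_two n
  rw [realZeta_two] at h
  nlinarith [Real.pi_lt_d2, Real.pi_pos]

end Zeta

section Koecher

lemma abs_altInvCentralBinom_le (n : ℕ) : |altInvCentralBinom n| ≤ 1 := by
  have h : (1 : ℝ) ≤ n.centralBinom := by exact_mod_cast n.centralBinom_pos
  rw [altInvCentralBinom, abs_div, abs_pow, abs_neg, abs_one, one_pow, Nat.abs_cast]
  exact div_le_one_of_le₀ h (by positivity)

lemma betaNat_nonneg (n k : ℕ) : 0 ≤ betaNat n k := by
  unfold betaNat
  positivity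

lemma betaNat_le (n k : ℕ) : betaNat n k ≤ 1 / ((n : ℝ) + k + 1) := by
  induction n with
  | zero => simp [betaNat_zero_left]
  | succ n ih =>
    have h : ((n : ℝ) + 1) / (n + k + 1) ≤ 1 := by
      rw [div_le_one (by positivity)]
      linarith [(k.cast_nonneg : (0 : ℝ) ≤ k)]
    calc betaNat (n + 1) k = betaNat n k * (n + 1) / ((n : ℝ) + k + 2) := betaNat_succ_left n k
      _ ≤ 1 / ((n : ℝ) + k + 1) * (n + 1) / ((n : ℝ) + k + 2) := by gcongr
      _ = ((n : ℝ) + 1) / (n + k + 1) / ((n : ℝ) + k + 2) := by ring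
      _ ≤ 1 / ((n : ℝ) + k + 2) := by gcongr
      _ = 1 / (((n + 1 : ℕ) : ℝ) + k + 1) := by push_cast; ring

/-- The harmonic factor of the Wilf–Zeilberger pair `koecherTerm`, `koecherCompanion`. -/
noncomputable def koecherHarmonic (n k : ℕ) : ℝ :=
  genHarmonic 2 (n + k + 1) - genHarmonic 2 k - 2 * genHarmonic 2 n

lemma koecherHarmonic_succ_left (n k : ℕ) : koecherHarmonic (n + 1) k =
    koecherHarmonic n k + 1 / ((n : ℝ) + k + 2) ^ 2 - 2 / ((n : ℝ) + 1) ^ 2 := by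
  rw [koecherHarmonic, koecherHarmonic, show n + 1 + k + 1 = (n + k + 1) + 1 by ring,
    genHarmonic_succ _ (n + k + 1), genHarmonic_succ _ n]
  push_cast
  ring

lemma koecherHarmonic_succ_right (n k : ℕ) : koecherHarmonic n (k + 1) =
    koecherHarmonic n k + 1 / ((n : ℝ) + k + 2) ^ 2 - 1 / ((k : ℝ) + 1) ^ 2 := by
  rw [koecherHarmonic, koecherHarmonic, show n + (k + 1) + 1 = (n + k + 1) + 1 by ring,
    genHarmonic_succ _ (n + k + 1), genHarmonic_succ _ k]
  push_cast
  ring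

lemma abs_koecherHarmonic_le (n k : ℕ) : |koecherHarmonic n k| ≤ 6 := by
  have h := fun i => genHarmonic_nonneg 2 i
  have h' := fun i => genHarmonic_two_le i
  rw [koecherHarmonic, abs_le]
  constructor <;> linarith [h n, h k, h (n + k + 1), h' n, h' k, h' (n + k + 1)]

/-- The summand of the real Wilf–Zeilberger pair behind Koecher's accelerated series for `ζ(5)`. -/
noncomputable def koecherTerm (n k : ℕ) : ℝ :=
  altInvCentralBinom n * betaNat n k ^ 4 * (n + 2 * k + 2) * koecherHarmonic n k

/-- The companion of `koecherTerm`. -/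
noncomputable def koecherCompanion (n k : ℕ) : ℝ :=
  altInvCentralBinom n * betaNat n k ^ 4 *
    ((2 * k ^ 2 + 6 * (n + 1) * k + 5 * (n + 1) ^ 2) * koecherHarmonic n k - 1) / (2 * (2 * n + 1))

lemma koecher_wz (n k : ℕ) : koecherTerm n k - koecherTerm (n + 1) k =
    koecherCompanion n k - koecherCompanion n (k + 1) := by
  simp only [koecherTerm, koecherCompanion, koecherHarmonic_succ_left, koecherHarmonic_succ_right,
    betaNat_succ_left, betaNat_succ_right, altInvCentralBinom_succ]
  generalize altInvCentralBinom n = a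
  generalize koecherHarmonic n k = g
  generalize betaNat n k = b
  push_cast
  field_simp
  ring

lemma abs_koecherTerm_le (n k : ℕ) :
    |koecherTerm n k| ≤ 12 * (1 / ((k : ℝ) + 1) ^ 2) * (1 / ((n : ℝ) + 1)) := by
  have hb := betaNat_le n k
  have hb0 := betaNat_nonneg n k
  have hn : (0 : ℝ) ≤ n := n.cast_nonneg
  have hk : (0 : ℝ) ≤ k := k.cast_nonneg
  rw [koecherTerm, abs_mul, abs_mul, abs_mul, abs_of_nonneg (pow_nonneg hb0 4),
    abs_of_nonneg (by positivity : (0 : ℝ) ≤ n + 2 * k + 2)]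
  calc |altInvCentralBinom n| * betaNat n k ^ 4 * (n + 2 * k + 2) * |koecherHarmonic n k|
      ≤ 1 * (1 / ((n : ℝ) + k + 1)) ^ 4 * (2 * ((n : ℝ) + k + 1)) * 6 := by
        gcongr
        · exact abs_altInvCentralBinom_le n
        · linarith only [hn]
        · exact abs_koecherHarmonic_le n k
    _ = 12 / (((n : ℝ) + k + 1) ^ 2 * ((n : ℝ) + k + 1)) := by field_simp; norm_num
    _ ≤ 12 / (((k : ℝ) + 1) ^ 2 * ((n : ℝ) + 1)) := by gcongr <;> linarith only [hn, hk]
    _ = 12 * (1 / ((k : ℝ) + 1) ^ 2) * (1 / ((n : ℝ) + 1)) := by field_simp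

lemma abs_koecherCompanion_le (n k : ℕ) : |koecherCompanion n k| ≤ 31 * (1 / ((k : ℝ) + 1)) := by
  have hb := betaNat_le n k
  have hb0 := betaNat_nonneg n k
  have hn : (0 : ℝ) ≤ n := n.cast_nonneg
  have hk : (0 : ℝ) ≤ k := k.cast_nonneg
  have hquad : (0 : ℝ) ≤ 2 * k ^ 2 + 6 * (n + 1) * k + 5 * (n + 1) ^ 2 := by positivity
  have hnum : |(2 * k ^ 2 + 6 * (n + 1) * k + 5 * (n + 1) ^ 2) * koecherHarmonic n k - 1| ≤
      31 * ((n : ℝ) + k + 1) ^ 2 := by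
    refine (abs_sub _ _).trans ?_
    rw [abs_mul, abs_of_nonneg hquad, abs_one]
    nlinarith [mul_nonneg hn hk, mul_le_mul_of_nonneg_left (abs_koecherHarmonic_le n k) hquad]
  rw [koecherCompanion, abs_div, abs_mul, abs_mul, abs_of_nonneg (pow_nonneg hb0 4),
    abs_of_nonneg (by positivity : (0 : ℝ) ≤ 2 * (2 * n + 1))]
  calc |altInvCentralBinom n| * betaNat n k ^ 4 *
        |(2 * k ^ 2 + 6 * (n + 1) * k + 5 * (n + 1) ^ 2) * koecherHarmonic n k - 1| /
          (2 * (2 * n + 1))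
      ≤ 1 * (1 / ((n : ℝ) + k + 1)) ^ 4 * (31 * ((n : ℝ) + k + 1) ^ 2) / 1 := by
        gcongr
        · exact abs_altInvCentralBinom_le n
        · linarith
    _ = 31 / (((n : ℝ) + k + 1) * ((n : ℝ) + k + 1)) := by field_simp
    _ ≤ 31 / (1 * ((k : ℝ) + 1)) := by gcongr <;> linarith
    _ = 31 * (1 / ((k : ℝ) + 1)) := by ring

lemma koecherTerm_zero (k : ℕ) : koecherTerm 0 k = 2 * (1 / ((k : ℝ) + 1) ^ 5) := by
  rw [koecherTerm, koecherHarmonic, betaNat_zero_left, zero_add, genHarmonic_succ,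
    genHarmonic_zero, altInvCentralBinom, Nat.centralBinom_zero]
  push_cast
  field_simp
  ring

lemma koecherCompanion_zero (n : ℕ) : koecherCompanion n 0 = altInvCentralBinom (n + 1) *
    (5 * genHarmonic 2 (n + 1) / ((n : ℝ) + 1) ^ 3 - 9 / ((n : ℝ) + 1) ^ 5) := by
  rw [koecherCompanion, betaNat_zero_right, koecherHarmonic, altInvCentralBinom_succ, add_zero,
    genHarmonic_succ, genHarmonic_zero]
  push_cast
  field_simp
  ring

theorem tendsto_sum_koecherCompanion :
    Tendsto (fun N => ∑ n ∈ Finset.range N, koecherCompanion n 0) atTop (𝓝 (2 * realZeta 5)) := by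
  have hinv := tendsto_one_div_add_atTop_nhds_zero_nat (𝕜 := ℝ)
  have hsum : ∑' k, koecherTerm 0 k = 2 * realZeta 5 := by
    simp only [koecherTerm_zero, tsum_mul_left, realZeta]
  rw [← hsum]
  refine tendsto_sum_of_wz koecher_wz ((hasSum_realZeta one_lt_two).summable.mul_left 12)
    (fun n k => ?_) (fun k => ?_) fun n => ?_
  · refine (abs_koecherTerm_le n k).trans (mul_le_of_le_one_right (by positivity) ?_)
    exact div_le_one_of_le₀ (by linarith [(n.cast_nonneg : (0 : ℝ) ≤ n)]) (by positivity)
  · exact squeeze_zero_norm (fun n => abs_koecherTerm_le n k)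
      (by simpa only [mul_zero] using hinv.const_mul (12 * (1 / ((k : ℝ) + 1) ^ 2)))
  · exact squeeze_zero_norm (fun k => abs_koecherCompanion_le n k)
      (by simpa only [mul_zero] using hinv.const_mul 31)

end Koecher

/-! ### Linear Euler sums of weight five -/

section Tornheim

variable {p q r : ℕ}

/-- The summand `m⁻ᵖ n⁻ᑫ (m + n)⁻ʳ` of the Tornheim double series, where `m = x.1 + 1` and
`n = x.2 + 1`. -/
noncomputable def tornheimTerm (p q r : ℕ) (x : ℕ × ℕ) : ℝ :=
  1 / (((x.1 : ℝ) + 1) ^ p * ((x.2 : ℝ) + 1) ^ q * ((x.1 : ℝ) + x.2 + 2) ^ r)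

/-- The Tornheim double series `T(p, q, r)`. The linear Euler sum `∑ₖ H_{k-1}^{(p)} / kʳ` is
`T(p, 0, r)`. -/
noncomputable def tornheimSum (p q r : ℕ) : ℝ := ∑' x, tornheimTerm p q r x

lemma tornheimSum_swap (p q r : ℕ) : tornheimSum p q r = tornheimSum q p r := by
  rw [tornheimSum, tornheimSum, ← (Equiv.prodComm ℕ ℕ).tsum_eq]
  refine tsum_congr fun x => ?_
  simp only [tornheimTerm, Equiv.prodComm_apply, Prod.fst_swap, Prod.snd_swap]
  ring

lemma hasSum_tornheimTerm_zero (hp : 1 < p) (hq : 1 < q) :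
    HasSum (tornheimTerm p q 0) (realZeta p * realZeta q) := by
  have hζp := hasSum_realZeta hp
  have hζq := hasSum_realZeta hq
  refine (hζp.mul hζq (hζp.summable.mul_of_nonneg hζq.summable (fun _ => by positivity)
    fun _ => by positivity)).congr_fun fun x => ?_
  rw [tornheimTerm, pow_zero, mul_one, one_div_mul_one_div]

lemma tornheimTerm_add_le (p q a b : ℕ) (x : ℕ × ℕ) :
    tornheimTerm p q (a + b) x ≤ tornheimTerm (p + a) (q + b) 0 x := by
  have hm : (0 : ℝ) ≤ x.1 := x.1.cast_nonneg
  have hn : (0 : ℝ) ≤ x.2 := x.2.cast_nonneg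
  rw [tornheimTerm, tornheimTerm, pow_zero, mul_one]
  refine one_div_le_one_div_of_le (by positivity) ?_
  calc ((x.1 : ℝ) + 1) ^ (p + a) * ((x.2 : ℝ) + 1) ^ (q + b)
      = ((x.1 : ℝ) + 1) ^ p * ((x.2 : ℝ) + 1) ^ q *
        (((x.1 : ℝ) + 1) ^ a * ((x.2 : ℝ) + 1) ^ b) := by ring
    _ ≤ ((x.1 : ℝ) + 1) ^ p * ((x.2 : ℝ) + 1) ^ q *
        (((x.1 : ℝ) + x.2 + 2) ^ a * ((x.1 : ℝ) + x.2 + 2) ^ b) := by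
      gcongr <;> linarith only [hm, hn]
    _ = ((x.1 : ℝ) + 1) ^ p * ((x.2 : ℝ) + 1) ^ q * ((x.1 : ℝ) + x.2 + 2) ^ (a + b) := by
      rw [pow_add _ a b]

lemma summable_tornheimTerm (hp : 1 < p + r) (hq : 1 < q + r) (h : 3 < p + q + r) :
    Summable (tornheimTerm p q r) := by
  obtain ⟨a, b, rfl, ha, hb⟩ : ∃ a b, r = a + b ∧ 1 < p + a ∧ 1 < q + b :=
    ⟨2 - p, r - (2 - p), by omega, by omega, by omega⟩
  exact .of_nonneg_of_le (fun x => by unfold tornheimTerm; positivity) (tornheimTerm_add_le p q a b)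
    (hasSum_tornheimTerm_zero ha hb).summable

lemma tornheimSum_succ_succ (h : 1 < p + q + r) (hp : 0 < p + r) (hq : 0 < q + r) :
    tornheimSum (p + 1) (q + 1) r =
      tornheimSum p (q + 1) (r + 1) + tornheimSum (p + 1) q (r + 1) := by
  rw [tornheimSum, tornheimSum, tornheimSum,
    ← (summable_tornheimTerm (by omega) (by omega) (by omega)).tsum_add
      (summable_tornheimTerm (by omega) (by omega) (by omega))]
  refine tsum_congr fun x => ?_
  simp only [tornheimTerm]
  field_simp
  ring

lemma hasSum_sum_antidiagonal {E : Type*} [NormedAddCommGroup E] [CompleteSpace E]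
    {f : ℕ × ℕ → E} (hf : Summable f) :
    HasSum (fun s => ∑ x ∈ antidiagonal s, f x) (∑' x, f x) := by
  refine (Finset.HasAntidiagonal.sigmaAntidiagonalEquivProd.hasSum_iff.2 hf.hasSum).sigma
    fun s => ?_
  rw [← Finset.sum_coe_sort]
  exact hasSum_fintype _

lemma hasSum_genHarmonic_div_pow (h : 3 < p + r) (hr : 1 < r) :
    HasSum (fun k : ℕ => genHarmonic p k / ((k : ℝ) + 1) ^ r) (tornheimSum p 0 r) := by
  have hsucc : HasSum (fun k : ℕ => genHarmonic p (k + 1) / (((k + 1 : ℕ) : ℝ) + 1) ^ r)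
      (tornheimSum p 0 r) := by
    refine (hasSum_sum_antidiagonal
      (summable_tornheimTerm (by omega) (by omega) (by omega))).congr_fun fun s => Eq.symm ?_
    rw [Finset.Nat.sum_antidiagonal_eq_sum_range_succ_mk, genHarmonic, Finset.sum_div]
    refine Finset.sum_congr rfl fun i hi => ?_
    rw [tornheimTerm, Nat.cast_sub (Finset.mem_range_succ_iff.1 hi), pow_zero, mul_one, div_div]
    push_cast
    ring
  simpa [genHarmonic_zero] using (hasSum_nat_add_iff (f := fun k : ℕ =>
    genHarmonic p k / ((k : ℝ) + 1) ^ r) 1).1 hsucc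

lemma hasSum_one_div_sub_one_div (m : ℕ) :
    HasSum (fun n : ℕ => 1 / ((n : ℝ) + 1) - 1 / ((n : ℝ) + m + 1)) (genHarmonic 1 m) := by
  induction m with
  | zero => simp [genHarmonic_zero]
  | succ m ih =>
    have hstep : HasSum (fun n : ℕ => 1 / ((n : ℝ) + m + 1) - 1 / ((n : ℝ) + 1 + m + 1))
        (1 / ((m : ℝ) + 1)) := by
      rw [hasSum_iff_tendsto_nat_of_nonneg fun n => sub_nonneg.2 (by gcongr; linarith)]
      have htel (N : ℕ) := Finset.sum_range_sub' (fun n : ℕ => 1 / ((n : ℝ) + m + 1)) N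
      have hlim := (tendsto_add_atTop_iff_nat m).2
        (tendsto_one_div_add_atTop_nhds_zero_nat (𝕜 := ℝ))
      push_cast at htel hlim
      simpa only [htel, zero_add, sub_zero] using hlim.const_sub (1 / ((m : ℝ) + 1))
    rw [genHarmonic_succ, pow_one]
    refine (ih.add hstep).congr_fun fun n => ?_
    rw [sub_add_sub_cancel]
    push_cast
    ring

theorem tornheimSum_one_one (hp : 1 < p) :
    tornheimSum p 1 1 = tornheimSum 1 0 (p + 1) + realZeta (p + 2) := by
  have hs := hasSum_genHarmonic_div_pow (p := 1) (r := p + 1) (by omega) (by omega)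
  have hζ := hasSum_realZeta (p := p + 2) (by omega)
  rw [tornheimSum, (summable_tornheimTerm (by omega) (by omega) (by omega)).tsum_prod,
    ← (hs.add hζ).tsum_eq]
  refine tsum_congr fun i => ?_
  have h := (hasSum_one_div_sub_one_div (i + 1)).mul_left (1 / ((i : ℝ) + 1) ^ (p + 1))
  rw [genHarmonic_succ] at h
  refine (h.congr_fun fun n => ?_).tsum_eq.trans ?_
  · simp only [tornheimTerm]
    push_cast
    field_simp
    ring
  · field_simp
    ring

theorem realZeta_mul_realZeta (hp : 1 < p) (hq : 1 < q) : realZeta p * realZeta q =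
    tornheimSum p 0 q + tornheimSum q 0 p + realZeta (p + q) := by
  have h := ((hasSum_genHarmonic_div_pow (p := p) (r := q) (by omega) hq).add
    (hasSum_genHarmonic_div_pow (p := q) (r := p) (by omega) hp)).add
      (hasSum_realZeta (p := p + q) (by omega))
  have hN (N : ℕ) : ∑ k ∈ Finset.range N, (genHarmonic p k / ((k : ℝ) + 1) ^ q +
      genHarmonic q k / ((k : ℝ) + 1) ^ p + 1 / ((k : ℝ) + 1) ^ (p + q)) =
        genHarmonic p N * genHarmonic q N := by
    induction N with
    | zero => simp [genHarmonic_zero]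
    | succ N ih =>
      rw [Finset.sum_range_succ, ih, genHarmonic_succ, genHarmonic_succ]
      field_simp
      ring
  refine tendsto_nhds_unique ?_ h.tendsto_sum_nat
  simp only [hN]
  exact (hasSum_realZeta hp).tendsto_sum_nat.mul (hasSum_realZeta hq).tendsto_sum_nat

theorem realZeta_mul_realZeta_eq_tornheimSum (hp : 1 < p) (hq : 1 < q) :
    realZeta p * realZeta q = tornheimSum p q 0 :=
  (hasSum_tornheimTerm_zero hp hq).tsum_eq.symm

end Tornheim

section EulerSums

lemma tornheimSum_two_one_two :
    tornheimSum 2 1 2 = 2 * tornheimSum 1 0 4 + tornheimSum 2 0 3 := by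
  have h := tornheimSum_succ_succ (p := 1) (q := 0) (r := 2) (by simp) (by simp) (by simp)
  have h' := tornheimSum_succ_succ (p := 0) (q := 0) (r := 3) (by simp) (by simp) (by simp)
  norm_num at h h'
  rw [h, h', tornheimSum_swap 0 1]
  ring

lemma tornheimSum_three_one_one :
    tornheimSum 3 1 1 = tornheimSum 2 1 2 + tornheimSum 3 0 2 :=
  tornheimSum_succ_succ (by simp) (by simp) (by simp)

lemma tornheimSum_two_three_zero :
    tornheimSum 2 3 0 = 3 * tornheimSum 2 1 2 + tornheimSum 3 0 2 := by
  have h := tornheimSum_succ_succ (p := 1) (q := 2) (r := 0) (by simp) (by simp) (by simp)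
  have h' := tornheimSum_succ_succ (p := 1) (q := 1) (r := 1) (by simp) (by simp) (by simp)
  norm_num at h h'
  rw [h, h', tornheimSum_swap 1 3, tornheimSum_swap 1 2, tornheimSum_three_one_one]
  ring

lemma tornheimSum_one_zero_four :
    tornheimSum 1 0 4 = 2 * realZeta 5 - realZeta 2 * realZeta 3 := by
  have hsum := tornheimSum_one_one (p := 3) (by norm_num)
  have hmul := realZeta_mul_realZeta (p := 2) (q := 3) (by norm_num) (by norm_num)
  norm_num at hsum hmul
  linarith [tornheimSum_three_one_one, tornheimSum_two_one_two]

lemma tornheimSum_three_zero_two :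
    tornheimSum 3 0 2 = 9 / 2 * realZeta 5 - 2 * (realZeta 2 * realZeta 3) := by
  have hzero := realZeta_mul_realZeta_eq_tornheimSum (p := 2) (q := 3) (by norm_num) (by norm_num)
  have hmul := realZeta_mul_realZeta (p := 2) (q := 3) (by norm_num) (by norm_num)
  norm_num at hmul
  linarith [tornheimSum_two_three_zero, tornheimSum_two_one_two, tornheimSum_one_zero_four]

lemma tornheimSum_two_zero_three :
    tornheimSum 2 0 3 = 3 * (realZeta 2 * realZeta 3) - 11 / 2 * realZeta 5 := by
  have hmul := realZeta_mul_realZeta (p := 2) (q := 3) (by norm_num) (by norm_num)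
  norm_num at hmul
  linarith [tornheimSum_three_zero_two]

end EulerSums

/-! ### Linear combination of the two evaluations -/

section Assembly

lemma tsum_coeff_three_gaussTerm_zero : ∑' k, coeff 3 (gaussTerm 0 k) =
    -(13 * realZeta 5 + 4 * tornheimSum 2 0 3 + 4 * tornheimSum 3 0 2) := by
  have h : HasSum (fun l => coeff 3 (gaussCompanion l 0)) _ :=
    ((((hasSum_realZeta (p := 5) (by norm_num)).mul_left 13).add
      ((hasSum_genHarmonic_div_pow (p := 2) (r := 3) (by norm_num) (by norm_num)).mul_left 4)).add
      ((hasSum_genHarmonic_div_pow (p := 3) (r := 2) (by norm_num) (by norm_num)).mul_left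
        4)).neg.congr_fun fun l => by
        rw [coeff_three_gaussCompanion_zero]
        ring
  exact tendsto_nhds_unique (tendsto_sum_coeff_gaussCompanion (by norm_num)) h.tendsto_sum_nat

lemma tsum_coeff_three_mainTerm_zero :
    ∑' k, coeff 3 (mainTerm 0 k) = 112 * (realZeta 2 * realZeta 3) - 158 * realZeta 5 := by
  have hg := (summable_coeff_gaussTerm_zero (i := 3) (by norm_num)).hasSum
  have h : HasSum (fun k => coeff 3 (mainTerm 0 k)) _ :=
    ((((hg.add ((hasSum_realZeta (p := 5) (by norm_num)).mul_left 60)).sub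
      ((hasSum_genHarmonic_div_pow (p := 1) (r := 4) (by norm_num) (by norm_num)).mul_left 20)).sub
      ((hasSum_genHarmonic_div_pow (p := 3) (r := 2) (by norm_num) (by norm_num)).mul_left
        20)).mul_left 2).congr_fun fun k => by
        rw [coeff_three_mainTerm_zero]
        ring
  rw [h.tsum_eq, tsum_coeff_three_gaussTerm_zero, tornheimSum_one_zero_four,
    tornheimSum_two_zero_three, tornheimSum_three_zero_two]
  ring

lemma risingFactorial_succ (a : ℝ) (n : ℕ) :
    risingFactorial a (n + 1) = risingFactorial a n * (a + n) :=
  Finset.prod_range_succ _ _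

lemma pow_mul_risingFactorial_div (n : ℕ) :
    (-1 / 4 : ℝ) ^ n * risingFactorial 1 n / risingFactorial (1 / 2) n = altInvCentralBinom n := by
  induction n with
  | zero => simp [risingFactorial, altInvCentralBinom]
  | succ n ih =>
    rw [altInvCentralBinom_succ, ← ih, risingFactorial_succ, risingFactorial_succ, pow_succ,
      mul_mul_mul_comm, mul_div_mul_comm, neg_mul_comm]
    congr 1
    field_simp
    ring

/-- The summand at index `n + 1` of the series to be evaluated, with its quotient of Pochhammer
symbols written as `altInvCentralBinom`. -/
noncomputable def zetaFiveTerm (n : ℕ) : ℝ :=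
  altInvCentralBinom (n + 1) *
    (genHarmonic 2 (2 * (n + 1)) / ((n : ℝ) + 1) ^ 3 - 32 / (5 * ((n : ℝ) + 1) ^ 5))

lemma summable_zetaFiveTerm : Summable zetaFiveTerm := by
  refine .of_norm_bounded
    (((hasSum_realZeta (p := 3) (by norm_num)).summable.mul_left 2).add
      ((hasSum_realZeta (p := 5) (by norm_num)).summable.mul_left (32 / 5))) fun n => ?_
  have h0 := genHarmonic_nonneg 2 (2 * (n + 1))
  have h2 := genHarmonic_two_le (2 * (n + 1))
  rw [zetaFiveTerm, norm_mul]
  refine (mul_le_of_le_one_left (norm_nonneg _) (abs_altInvCentralBinom_le _)).trans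
    ((norm_sub_le _ _).trans ?_)
  rw [Real.norm_of_nonneg (by positivity), Real.norm_of_nonneg (by positivity), mul_one_div,
    div_mul_div_comm, mul_one]
  gcongr

-- the weights `1` and `-3` are chosen so that the two multiples of `H_n^{(2)}` cancel
lemma zetaFiveTerm_eq (n : ℕ) : zetaFiveTerm n =
    1 / 20 * (coeff 3 (mainCompanion n 0) - 3 * koecherCompanion n 0) := by
  rw [zetaFiveTerm, coeff_three_mainCompanion_zero, koecherCompanion_zero]
  field_simp
  ring

theorem tsum_zetaFiveTerm :
    ∑' n, zetaFiveTerm n = 28 / 5 * (realZeta 2 * realZeta 3) - 41 / 5 * realZeta 5 := by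
  have h := ((tendsto_sum_coeff_mainCompanion (i := 3) (by norm_num)).sub
    (tendsto_sum_koecherCompanion.const_mul 3)).const_mul (1 / 20 : ℝ)
  simp only [Finset.mul_sum, ← Finset.sum_sub_distrib, ← zetaFiveTerm_eq] at h
  rw [tendsto_nhds_unique summable_zetaFiveTerm.hasSum.tendsto_sum_nat h,
    tsum_coeff_three_mainTerm_zero]
  ring

end Assembly

/-- `∑_{n≥1} (−1/4)^n (1)ₙ/(1/2)ₙ [ H_{2n}^{(2)}/n³ − 32/(5n^5) ]
    = −(41/5)ζ(5) + (14/15)π²ζ(3)`. -/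
theorem harmonic2n2_zeta5_series :
    ∑' n : ℕ, ((((-1 / 4 : ℝ) ^ (n + 1) * risingFactorial 1 (n + 1) /
        risingFactorial (1 / 2) (n + 1) *
        (genHarmonic 2 (2 * (n + 1)) / ((n : ℝ) + 1) ^ 3 -
          32 / (5 * ((n : ℝ) + 1) ^ 5)) : ℝ)) : ℂ)
      = -(41 / 5) * riemannZeta 5 + 14 / 15 * (Real.pi : ℂ) ^ 2 * riemannZeta 3 := by
  have h5 := ofReal_realZeta (p := 5) (by norm_num)
  have h3 := ofReal_realZeta (p := 3) (by norm_num)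
  rw [Nat.cast_ofNat] at h5 h3
  rw [← Complex.ofReal_tsum]
  simp only [pow_mul_risingFactorial_div]
  refine (congrArg Complex.ofReal tsum_zetaFiveTerm).trans ?_
  rw [realZeta_two, ← h5, ← h3]
  push_cast
  ring
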